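/- arXiv:2206.03347 — 2 statements merged into one kernel-verified Lean document; each statement's English description precedes it below -/
import Mathlib

section
/- Let μ⁻, μ⁺ be probability measures on ℝ^d with compact supports X⁻, X⁺ and let c : X⁻ × X⁺ → ℝ be continuous. Assume there exists an optimal transport plan γ₀ ∈ Opt(μ⁻,μ⁺) with Ent(γ₀ | μ⁻⊗μ⁺) < +∞. Then there is a unique coupling γ* ∈ Opt(μ⁻,μ⁺) minimizing Ent(· | μ⁻⊗μ⁺) over Opt(μ⁻,μ⁺), and for every ε > 0, denoting γ_ε the minimizer of the entropic problem at parameter ε, the plans γ_ε converge narrowly (weakly against bounded continuous functions on ℝ^d × ℝ^d) to γ* as ε → 0⁺. -/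
open MeasureTheory Real Set Filter Classical
open scoped ENNReal NNReal Topology

noncomputable section

/-- Relative entropy (Kullback–Leibler divergence) `Ent(γ | q)`, with values in `EReal`:
it equals `∫ ρ log ρ dq` if `γ = ρ·q` (with `ρ log ρ` integrable) and `+∞` otherwise. -/
def Ent {α : Type*} [MeasurableSpace α] (γ q : Measure α) : EReal :=
  if γ ≪ q ∧ Integrable (fun x => ((γ.rnDeriv q) x).toReal * Real.log ((γ.rnDeriv q) x).toReal) q
  then ((∫ x, ((γ.rnDeriv q) x).toReal * Real.log ((γ.rnDeriv q) x).toReal ∂q : ℝ) : EReal)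
  else ⊤

/-- Entropic optimal transport cost
`v_ε = inf { ∫ c dγ + ε Ent(γ | μ⁻ ⊗ μ⁺) : γ coupling of μ⁻ and μ⁺ }`. -/
def entCost {α β : Type*} [MeasurableSpace α] [MeasurableSpace β]
    (μm : Measure α) (μp : Measure β) (c : α × β → ℝ) (ε : ℝ) : EReal :=
  sInf {v : EReal | ∃ γ : Measure (α × β), IsProbabilityMeasure γ ∧ γ.fst = μm ∧ γ.snd = μp ∧
    v = ((∫ p, c p ∂γ : ℝ) : EReal) + (ε : EReal) * Ent γ (μm.prod μp)}

/-- Support of a measure: the set of points all of whose open neighbourhoods have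
positive measure. -/
def msupport {α : Type*} [TopologicalSpace α] [MeasurableSpace α] (μ : Measure α) : Set α :=
  {x | ∀ U : Set α, IsOpen U → x ∈ U → μ U ≠ 0}

/-- A quadratic lower bound for the convex function `x log x` around the point `m`. -/
lemma mul_log_add_sq_sqrt_le {x m : ℝ} (hx : 0 ≤ x) (hm : 0 < m) :
    x * Real.log m + x - m + (√x - √m) ^ 2 ≤ x * Real.log x := by
  have hm2 : √m * √m = m := Real.mul_self_sqrt hm.le
  have hx2 : √x * √x = x := Real.mul_self_sqrt hx
  rcases hx.eq_or_lt with rfl | hx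
  · simp [Real.sq_sqrt hm.le]
  have hsx := Real.sqrt_pos.2 hx
  have hsm := Real.sqrt_pos.2 hm
  have h1 := Real.log_le_sub_one_of_pos (div_pos hsm hsx)
  rw [Real.log_div hsm.ne' hsx.ne', Real.log_sqrt hm.le, Real.log_sqrt hx.le] at h1
  have h2 : x * (√m / √x) = √x * √m := by
    nth_rewrite 1 [← hx2]
    field_simp
  nlinarith [mul_le_mul_of_nonneg_left h1 hx.le]

/-- Strong midpoint convexity of `x log x`. -/
lemma sq_sqrt_sub_sqrt_le_mul_log_gap {a b : ℝ} (ha : 0 ≤ a) (hb : 0 ≤ b) :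
    (√a - √b) ^ 2 / 4 ≤ (a * Real.log a + b * Real.log b) / 2
      - (a + b) / 2 * Real.log ((a + b) / 2) := by
  rcases (add_nonneg ha hb).eq_or_lt with h | h
  · obtain rfl : a = 0 := by linarith
    obtain rfl : b = 0 := by linarith
    simp
  have h1 := mul_log_add_sq_sqrt_le ha (half_pos h)
  have h2 := mul_log_add_sq_sqrt_le hb (half_pos h)
  nlinarith [sq_nonneg ((√a - √((a + b) / 2)) + (√b - √((a + b) / 2)))]

lemma abs_sub_le_mul_log_gap {a b t : ℝ} (ha : 0 ≤ a) (hb : 0 ≤ b) (ht : 0 < t) :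
    |a - b| ≤ ((a * Real.log a + b * Real.log b) / 2
      - (a + b) / 2 * Real.log ((a + b) / 2)) / t + 2 * t * (a + b) := by
  have h := div_le_div_of_nonneg_right (sq_sqrt_sub_sqrt_le_mul_log_gap ha hb) ht.le
  refine le_trans ?_ (add_le_add_left h _)
  have ha2 : √a * √a = a := Real.mul_self_sqrt ha
  have hb2 : √b * √b = b := Real.mul_self_sqrt hb
  have hab : |a - b| = |√a - √b| * (√a + √b) := by
    rw [← abs_of_nonneg (add_nonneg (Real.sqrt_nonneg a) (Real.sqrt_nonneg b)), ← abs_mul]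
    congr 1
    linear_combination -ha2 + hb2
  have hsum : (√a + √b) ^ 2 ≤ 2 * (a + b) := by nlinarith [sq_nonneg (√a - √b)]
  have hsq : (√a - √b) ^ 2 = |√a - √b| ^ 2 := (sq_abs _).symm
  rw [hab, hsq]
  set u := |√a - √b|
  set v := √a + √b
  have h3 : u * v ≤ u ^ 2 / 4 / t + t * v ^ 2 := by
    have : u ^ 2 / 4 / t + t * v ^ 2 - u * v = (u / 2 - t * v) ^ 2 / t := by
      field_simp
      ring
    have h4 : 0 ≤ (u / 2 - t * v) ^ 2 / t := by positivity
    linarith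
  nlinarith [mul_le_mul_of_nonneg_left hsum ht.le]

lemma sub_one_le_mul_log {x : ℝ} (hx : 0 ≤ x) : x - 1 ≤ x * Real.log x := by
  have := mul_log_add_sq_sqrt_le hx one_pos
  simp only [Real.log_one, mul_zero, zero_add] at this
  nlinarith [sq_nonneg (√x - √1)]

section Density

variable {α β : Type*} [MeasurableSpace α] [MeasurableSpace β] {q : Measure α}

lemma Measurable.mul_log {f : α → ℝ} (hf : Measurable f) :
    Measurable fun x => f x * Real.log (f x) :=
  hf.mul (Real.measurable_log.comp hf)

lemma integrable_mul_log_midpoint [IsFiniteMeasure q] {f g : α → ℝ}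
    (hf : Measurable f) (hg : Measurable g) (hf0 : ∀ x, 0 ≤ f x) (hg0 : ∀ x, 0 ≤ g x)
    (hfl : Integrable (fun x => f x * Real.log (f x)) q)
    (hgl : Integrable (fun x => g x * Real.log (g x)) q) :
    Integrable (fun x => (f x + g x) / 2 * Real.log ((f x + g x) / 2)) q := by
  refine integrable_of_le_of_le (g₁ := fun _ => -1)
    (g₂ := fun x => (f x * Real.log (f x) + g x * Real.log (g x)) / 2)
    ((hf.add hg).div_const 2).mul_log.aestronglyMeasurable
    (Eventually.of_forall fun x => ?_) (Eventually.of_forall fun x => ?_)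
    (integrable_const _) ((hfl.add hgl).div_const 2)
  · have h := add_nonneg (hf0 x) (hg0 x)
    have := sub_one_le_mul_log (x := (f x + g x) / 2) (by positivity)
    show (-1 : ℝ) ≤ _
    linarith
  · have := sq_sqrt_sub_sqrt_le_mul_log_gap (hf0 x) (hg0 x)
    have h2 : 0 ≤ (√(f x) - √(g x)) ^ 2 / 4 := by positivity
    show _ ≤ (f x * Real.log (f x) + g x * Real.log (g x)) / 2
    linarith

lemma integral_abs_sub_le_entropy_gap [IsFiniteMeasure q] {f g : α → ℝ}
    (hf : Measurable f) (hg : Measurable g) (hf0 : ∀ x, 0 ≤ f x) (hg0 : ∀ x, 0 ≤ g x)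
    (hfi : Integrable f q) (hgi : Integrable g q)
    (hfl : Integrable (fun x => f x * Real.log (f x)) q)
    (hgl : Integrable (fun x => g x * Real.log (g x)) q) {t : ℝ} (ht : 0 < t) :
    ∫ x, |f x - g x| ∂q ≤
      ((∫ x, f x * Real.log (f x) ∂q + ∫ x, g x * Real.log (g x) ∂q) / 2
        - ∫ x, (f x + g x) / 2 * Real.log ((f x + g x) / 2) ∂q) / t
        + 2 * t * (∫ x, f x ∂q + ∫ x, g x ∂q) := by
  have hml := integrable_mul_log_midpoint hf hg hf0 hg0 hfl hgl
  have hi1 : Integrable (fun x => (f x * Real.log (f x) + g x * Real.log (g x)) / 2) q :=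
    (hfl.add hgl).div_const 2
  have hi2 : Integrable (fun x => ((f x * Real.log (f x) + g x * Real.log (g x)) / 2
        - (f x + g x) / 2 * Real.log ((f x + g x) / 2)) / t) q := (hi1.sub hml).div_const t
  have hi3 : Integrable (fun x => 2 * t * (f x + g x)) q := (hfi.add hgi).const_mul _
  calc ∫ x, |f x - g x| ∂q
      ≤ ∫ x, (((f x * Real.log (f x) + g x * Real.log (g x)) / 2
        - (f x + g x) / 2 * Real.log ((f x + g x) / 2)) / t + 2 * t * (f x + g x)) ∂q :=
        integral_mono (hfi.sub hgi).abs (hi2.add hi3)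
          fun x => abs_sub_le_mul_log_gap (hf0 x) (hg0 x) ht
    _ = _ := by
        rw [integral_add hi2 hi3, integral_div, integral_sub hi1 hml, integral_div,
          integral_add hfl hgl, integral_const_mul, integral_add hfi hgi]

/-- Completeness of `L¹` for nonnegative functions, in terms of integrals. -/
lemma exists_tendsto_integral_abs_sub {ι : Type*} {l : Filter ι} [l.NeBot] {F : ι → α → ℝ}
    (hFi : ∀ i, Integrable (F i) q) (hF0 : ∀ i x, 0 ≤ F i x)
    (hC : ∀ e > 0, ∃ s ∈ l, ∀ i ∈ s, ∀ j ∈ s, ∫ x, |F i x - F j x| ∂q < e) :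
    ∃ g : α → ℝ, Measurable g ∧ (∀ x, 0 ≤ g x) ∧ Integrable g q ∧
      Tendsto (fun i => ∫ x, |F i x - g x| ∂q) l (𝓝 0) := by
  have hdist : ∀ i j, dist ((hFi i).toL1 (F i)) ((hFi j).toL1 (F j)) =
      ∫ x, |F i x - F j x| ∂q := by
    intro i j
    rw [L1.dist_eq_integral_dist]
    refine integral_congr_ae ?_
    filter_upwards [(hFi i).coeFn_toL1, (hFi j).coeFn_toL1] with x h1 h2
    rw [h1, h2, Real.dist_eq]
  have hcau : Cauchy (map (fun i => (hFi i).toL1 (F i)) l) := by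
    refine Metric.cauchy_iff.2 ⟨inferInstance, fun e he => ?_⟩
    obtain ⟨s, hs, h⟩ := hC e he
    refine ⟨_, image_mem_map hs, ?_⟩
    rintro _ ⟨i, hi, rfl⟩ _ ⟨j, hj, rfl⟩
    rw [hdist]
    exact h i hi j hj
  obtain ⟨G, hG⟩ := CompleteSpace.complete hcau
  have hGm := (Lp.aestronglyMeasurable G)
  have hGi : Integrable (hGm.mk G) q := (L1.integrable_coeFn G).congr hGm.ae_eq_mk
  refine ⟨fun x => max (hGm.mk G x) 0, hGm.stronglyMeasurable_mk.measurable.max measurable_const,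
    fun x => le_max_right _ _, hGi.pos_part, ?_⟩
  have hG' : Tendsto (fun i => dist ((hFi i).toL1 (F i)) G) l (𝓝 0) :=
    tendsto_iff_dist_tendsto_zero.1 hG
  refine squeeze_zero (fun i => integral_nonneg fun x => abs_nonneg _) (fun i => ?_) hG'
  have hd : dist ((hFi i).toL1 (F i)) G = ∫ x, |F i x - hGm.mk G x| ∂q := by
    rw [L1.dist_eq_integral_dist]
    refine integral_congr_ae ?_
    filter_upwards [(hFi i).coeFn_toL1, hGm.ae_eq_mk] with x h1 h2
    rw [h1, h2, Real.dist_eq]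
  rw [hd]
  refine integral_mono ((hFi i).sub hGi.pos_part).abs ((hFi i).sub hGi).abs fun x => ?_
  have h := abs_max_sub_max_le_abs (F i x) (hGm.mk G x) 0
  rwa [max_eq_left (hF0 i x)] at h

/-- `L¹` convergence passes to integrals against bounded functions. -/
lemma tendsto_integral_mul_of_tendsto_integral_abs_sub {ι : Type*} {l : Filter ι}
    {F : ι → α → ℝ} {g h : α → ℝ} (hFi : ∀ i, Integrable (F i) q) (hgi : Integrable g q)
    (hF : Tendsto (fun i => ∫ x, |F i x - g x| ∂q) l (𝓝 0))
    (hh : AEStronglyMeasurable h q) {M : ℝ} (hM : ∀ᵐ x ∂q, ‖h x‖ ≤ M) :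
    Tendsto (fun i => ∫ x, F i x * h x ∂q) l (𝓝 (∫ x, g x * h x ∂q)) := by
  rw [tendsto_iff_dist_tendsto_zero]
  have hF' := hF.mul_const M
  rw [zero_mul] at hF'
  refine squeeze_zero (fun i => dist_nonneg) (fun i => ?_) hF'
  rw [Real.dist_eq, ← integral_sub ((hFi i).mul_bdd hh hM) (hgi.mul_bdd hh hM),
    ← integral_mul_const]
  refine abs_integral_le_integral_abs.trans (integral_mono_ae
    (((hFi i).mul_bdd hh hM).sub (hgi.mul_bdd hh hM)).abs
    (((hFi i).sub hgi).abs.mul_const M) ?_)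
  filter_upwards [hM] with x hx
  rw [← sub_mul, abs_mul]
  exact mul_le_mul_of_nonneg_left hx (abs_nonneg _)

lemma ofReal_integral_abs_sub {f g : α → ℝ} (hf : Integrable f q) (hg : Integrable g q) :
    ENNReal.ofReal (∫ x, |f x - g x| ∂q) = ∫⁻ x, ‖f x - g x‖ₑ ∂q := by
  simpa only [Pi.sub_apply, Real.norm_eq_abs] using
    ofReal_integral_norm_eq_lintegral_enorm (hf.sub hg)

lemma tendsto_setIntegral_of_tendsto_integral_abs_sub {ι : Type*} {l : Filter ι}
    {F : ι → α → ℝ} {g : α → ℝ} (hFi : ∀ i, Integrable (F i) q) (hgi : Integrable g q)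
    (hF : Tendsto (fun i => ∫ x, |F i x - g x| ∂q) l (𝓝 0)) (S : Set α) :
    Tendsto (fun i => ∫ x in S, F i x ∂q) l (𝓝 (∫ x in S, g x ∂q)) := by
  refine tendsto_setIntegral_of_L1 g hgi.aestronglyMeasurable (Eventually.of_forall hFi) ?_ S
  have h := ENNReal.tendsto_ofReal hF
  rw [ENNReal.ofReal_zero] at h
  exact h.congr fun i => ofReal_integral_abs_sub (hFi i) hgi

/-- Lower semicontinuity of the entropy under `L¹` convergence of densities. -/
lemma entropy_le_of_tendsto [IsProbabilityMeasure q] {ι : Type*} {l : Filter ι} [l.NeBot]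
    [l.IsCountablyGenerated] {F : ι → α → ℝ} {g : α → ℝ}
    (hFm : ∀ i, Measurable (F i)) (hF0 : ∀ i x, 0 ≤ F i x)
    (hFi : ∀ i, Integrable (F i) q) (hgm : Measurable g) (hg0 : ∀ x, 0 ≤ g x)
    (hgi : Integrable g q)
    (hF : Tendsto (fun i => ∫ x, |F i x - g x| ∂q) l (𝓝 0)) {C : ℝ}
    (hC : ∀ᶠ i in l, Integrable (fun x => F i x * Real.log (F i x)) q ∧
      ∫ x, F i x * Real.log (F i x) ∂q ≤ C) :
    Integrable (fun x => g x * Real.log (g x)) q ∧ ∫ x, g x * Real.log (g x) ∂q ≤ C := by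
  have hmeas : TendstoInMeasure q F l g := by
    refine tendstoInMeasure_of_tendsto_eLpNorm one_ne_zero
      (fun i => (hFm i).aestronglyMeasurable) hgm.aestronglyMeasurable ?_
    have h := ENNReal.tendsto_ofReal hF
    rw [ENNReal.ofReal_zero] at h
    refine h.congr fun i => ?_
    rw [ofReal_integral_abs_sub (hFi i) hgi, eLpNorm_one_eq_lintegral_enorm]
    rfl
  obtain ⟨ns, hns, hae⟩ := hmeas.exists_seq_tendsto_ae'
  have hnn : ∀ {x : ℝ}, 0 ≤ x → 0 ≤ x * Real.log x + 1 := fun hx => by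
    linarith [sub_one_le_mul_log hx]
  have hbound : ∫⁻ x, ENNReal.ofReal (g x * Real.log (g x) + 1) ∂q ≤ ENNReal.ofReal (C + 1) := by
    calc ∫⁻ x, ENNReal.ofReal (g x * Real.log (g x) + 1) ∂q
        = ∫⁻ x, liminf (fun n => ENNReal.ofReal
            (F (ns n) x * Real.log (F (ns n) x) + 1)) atTop ∂q := by
          refine lintegral_congr_ae ?_
          filter_upwards [hae] with x hx
          refine (Tendsto.liminf_eq (ENNReal.tendsto_ofReal ?_)).symm
          exact ((Real.continuous_mul_log.tendsto _).comp hx).add_const 1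
      _ ≤ liminf (fun n => ∫⁻ x, ENNReal.ofReal
            (F (ns n) x * Real.log (F (ns n) x) + 1) ∂q) atTop :=
          lintegral_liminf_le fun n => ((hFm _).mul_log.add_const 1).ennreal_ofReal
      _ ≤ ENNReal.ofReal (C + 1) := by
          refine liminf_le_of_frequently_le' (Eventually.frequently ?_)
          filter_upwards [hns.eventually hC] with n hn
          have hi : Integrable (fun x => F (ns n) x * Real.log (F (ns n) x) + 1) q :=
            hn.1.add (integrable_const 1)
          rw [← ofReal_integral_eq_lintegral_ofReal hi
            (Eventually.of_forall fun x => hnn (hF0 _ x))]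
          refine ENNReal.ofReal_le_ofReal ?_
          rw [integral_add hn.1 (integrable_const 1)]
          simpa using hn.2
  have hg0' : 0 ≤ᵐ[q] fun x => g x * Real.log (g x) + 1 :=
    Eventually.of_forall fun x => hnn (hg0 x)
  have hint1 : Integrable (fun x => g x * Real.log (g x) + 1) q := by
    refine ⟨(hgm.mul_log.add_const 1).aestronglyMeasurable, ?_⟩
    rw [hasFiniteIntegral_iff_ofReal hg0']
    exact hbound.trans_lt ENNReal.ofReal_lt_top
  have hint : Integrable (fun x => g x * Real.log (g x)) q :=
    (hint1.sub (integrable_const (1 : ℝ))).congr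
      (Eventually.of_forall fun x => add_sub_cancel_right _ _)
  refine ⟨hint, ?_⟩
  rw [← ofReal_integral_eq_lintegral_ofReal hint1 hg0'] at hbound
  have hsum : ∫ x, (g x * Real.log (g x) + 1) ∂q = ∫ x, g x * Real.log (g x) ∂q + 1 := by
    rw [integral_add hint (integrable_const 1)]
    simp
  obtain ⟨i, hi⟩ := hC.exists
  have hC1 : -1 ≤ C := by
    refine le_trans ?_ hi.2
    have := integral_mono (integrable_const (-1 : ℝ)) hi.1
      (fun x => by linarith [hnn (hF0 i x)])
    simpa using this
  rw [ENNReal.ofReal_le_ofReal_iff (by linarith), hsum] at hbound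
  linarith

/-- The measure with real density `f` with respect to `q`. -/
def densityMeasure (q : Measure α) (f : α → ℝ) : Measure α :=
  q.withDensity fun x => ENNReal.ofReal (f x)

lemma densityMeasure_apply {f : α → ℝ} (hf0 : ∀ x, 0 ≤ f x) (hfi : Integrable f q) {S : Set α}
    (hS : MeasurableSet S) : densityMeasure q f S = ENNReal.ofReal (∫ x in S, f x ∂q) := by
  rw [densityMeasure, withDensity_apply _ hS, ofReal_integral_eq_lintegral_ofReal hfi.integrableOn
    (Eventually.of_forall hf0)]

lemma integral_densityMeasure {f : α → ℝ} (hf : Measurable f) (hf0 : ∀ x, 0 ≤ f x) (h : α → ℝ) :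
    ∫ x, h x ∂(densityMeasure q f) = ∫ x, f x * h x ∂q := by
  rw [densityMeasure, integral_withDensity_eq_integral_toReal_smul hf.ennreal_ofReal
    (Eventually.of_forall fun x => ENNReal.ofReal_lt_top)]
  simp only [ENNReal.toReal_ofReal (hf0 _), smul_eq_mul]

lemma map_densityMeasure_eq_iff {f : α → ℝ} (hf0 : ∀ x, 0 ≤ f x) (hfi : Integrable f q)
    {T : α → β} (hT : Measurable T) {ν : Measure β} [IsFiniteMeasure ν] :
    (densityMeasure q f).map T = ν ↔
      ∀ A, MeasurableSet A → ∫ x in T ⁻¹' A, f x ∂q = ν.real A := by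
  have key : ∀ A, MeasurableSet A →
      (densityMeasure q f).map T A = ENNReal.ofReal (∫ x in T ⁻¹' A, f x ∂q) := fun A hA => by
    rw [Measure.map_apply hT hA, densityMeasure_apply hf0 hfi (hT hA)]
  constructor
  · rintro rfl A hA
    rw [measureReal_def, key A hA, ENNReal.toReal_ofReal (integral_nonneg hf0)]
  · intro h
    ext A hA
    rw [key A hA, h A hA, ofReal_measureReal]

lemma map_densityMeasure_midpoint {f g : α → ℝ} (hf0 : ∀ x, 0 ≤ f x) (hg0 : ∀ x, 0 ≤ g x)
    (hfi : Integrable f q) (hgi : Integrable g q) {T : α → β} (hT : Measurable T)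
    {ν : Measure β} [IsFiniteMeasure ν] (hf : (densityMeasure q f).map T = ν)
    (hg : (densityMeasure q g).map T = ν) :
    (densityMeasure q fun x => (f x + g x) / 2).map T = ν := by
  rw [map_densityMeasure_eq_iff hf0 hfi hT] at hf
  rw [map_densityMeasure_eq_iff hg0 hgi hT] at hg
  rw [map_densityMeasure_eq_iff (fun x => div_nonneg (add_nonneg (hf0 x) (hg0 x)) two_pos.le)
    ((hfi.add hgi).div_const 2) hT]
  intro A hA
  rw [integral_div, integral_add hfi.integrableOn hgi.integrableOn, hf A hA, hg A hA]
  ring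

lemma map_densityMeasure_of_tendsto {ι : Type*} {l : Filter ι} [l.NeBot] {F : ι → α → ℝ}
    {g : α → ℝ} (hF0 : ∀ i x, 0 ≤ F i x) (hg0 : ∀ x, 0 ≤ g x)
    (hFi : ∀ i, Integrable (F i) q) (hgi : Integrable g q)
    (hF : Tendsto (fun i => ∫ x, |F i x - g x| ∂q) l (𝓝 0)) {T : α → β} (hT : Measurable T)
    {ν : Measure β} [IsFiniteMeasure ν] (h : ∀ᶠ i in l, (densityMeasure q (F i)).map T = ν) :
    (densityMeasure q g).map T = ν := by
  rw [map_densityMeasure_eq_iff hg0 hgi hT]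
  intro A hA
  refine tendsto_nhds_unique (tendsto_setIntegral_of_tendsto_integral_abs_sub hFi hgi hF _)
    (tendsto_const_nhds.congr' ?_)
  filter_upwards [h] with i hi
  exact ((map_densityMeasure_eq_iff (hF0 i) (hFi i) hT).1 hi A hA).symm

lemma Ent_densityMeasure [SigmaFinite q] {f : α → ℝ} (hf : Measurable f) (hf0 : ∀ x, 0 ≤ f x)
    (hfl : Integrable (fun x => f x * Real.log (f x)) q) :
    Ent (densityMeasure q f) q = ((∫ x, f x * Real.log (f x) ∂q : ℝ) : EReal) := by
  have hae : (fun x => ((densityMeasure q f).rnDeriv q x).toReal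
      * Real.log ((densityMeasure q f).rnDeriv q x).toReal) =ᵐ[q]
      fun x => f x * Real.log (f x) := by
    filter_upwards [Measure.rnDeriv_withDensity q hf.ennreal_ofReal] with x hx
    rw [densityMeasure, hx, ENNReal.toReal_ofReal (hf0 x)]
  rw [Ent, if_pos ⟨withDensity_absolutelyContinuous _ _, hfl.congr hae.symm⟩,
    integral_congr_ae hae]

lemma exists_eq_densityMeasure_of_Ent_ne_top [SigmaFinite q] {ν : Measure α} [IsFiniteMeasure ν]
    (h : Ent ν q ≠ ⊤) :
    ∃ f : α → ℝ, Measurable f ∧ (∀ x, 0 ≤ f x) ∧ Integrable f q ∧ ν = densityMeasure q f ∧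
      Integrable (fun x => f x * Real.log (f x)) q := by
  have hfin : ν ≪ q ∧ Integrable (fun x => ((ν.rnDeriv q) x).toReal
      * Real.log ((ν.rnDeriv q) x).toReal) q := by
    by_contra hn
    exact h (if_neg hn)
  refine ⟨fun x => (ν.rnDeriv q x).toReal, (Measure.measurable_rnDeriv ν q).ennreal_toReal,
    fun x => ENNReal.toReal_nonneg, Measure.integrable_toReal_rnDeriv, ?_, hfin.2⟩
  conv_lhs => rw [← Measure.withDensity_rnDeriv_eq ν q hfin.1]
  refine withDensity_congr_ae ?_
  filter_upwards [Measure.rnDeriv_lt_top ν q] with x hx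
  rw [ENNReal.ofReal_toReal hx.ne]

end Density

lemma measure_compl_msupport {α : Type*} [TopologicalSpace α] [SecondCountableTopology α]
    [MeasurableSpace α] (μ : Measure α) : μ (msupport μ)ᶜ = 0 := by
  refine measure_null_of_locally_null _ fun x hx => ?_
  simp only [msupport, mem_compl_iff, mem_ofPred_eq, not_forall, not_not] at hx
  obtain ⟨U, hU, hxU, h0⟩ := hx
  exact ⟨U, mem_nhdsWithin_of_mem_nhds (hU.mem_nhds hxU), h0⟩

section Coupling

variable {α β : Type*} [MeasurableSpace α] [MeasurableSpace β] {μm : Measure α} {μp : Measure β}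

/-- `f` is the density, with finite entropy, of a coupling of `μm` and `μp` with respect to
`μm.prod μp`. -/
structure IsCouplingDensity (μm : Measure α) (μp : Measure β) (f : α × β → ℝ) : Prop where
  measurable : Measurable f
  nonneg : ∀ x, 0 ≤ f x
  integrable : Integrable f (μm.prod μp)
  integrable_mul_log : Integrable (fun x => f x * Real.log (f x)) (μm.prod μp)
  fst_eq : (densityMeasure (μm.prod μp) f).fst = μm
  snd_eq : (densityMeasure (μm.prod μp) f).snd = μp

namespace IsCouplingDensity

variable {f g : α × β → ℝ}

lemma integral_eq_one [IsProbabilityMeasure μm] (hf : IsCouplingDensity μm μp f) : ∫ x, f x ∂(μm.prod μp) = 1 := by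
  have h := (map_densityMeasure_eq_iff hf.nonneg hf.integrable measurable_fst).1 hf.fst_eq
    univ MeasurableSet.univ
  simpa using h

variable [IsProbabilityMeasure μm] [IsProbabilityMeasure μp]

lemma midpoint (hf : IsCouplingDensity μm μp f) (hg : IsCouplingDensity μm μp g) :
    IsCouplingDensity μm μp fun x => (f x + g x) / 2 where
  measurable := (hf.measurable.add hg.measurable).div_const 2
  nonneg x := div_nonneg (add_nonneg (hf.nonneg x) (hg.nonneg x)) two_pos.le
  integrable := (hf.integrable.add hg.integrable).div_const 2
  integrable_mul_log := integrable_mul_log_midpoint hf.measurable hg.measurable hf.nonneg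
    hg.nonneg hf.integrable_mul_log hg.integrable_mul_log
  fst_eq := map_densityMeasure_midpoint hf.nonneg hg.nonneg hf.integrable hg.integrable
    measurable_fst hf.fst_eq hg.fst_eq
  snd_eq := map_densityMeasure_midpoint hf.nonneg hg.nonneg hf.integrable hg.integrable
    measurable_snd hf.snd_eq hg.snd_eq

lemma entropy_nonneg (hf : IsCouplingDensity μm μp f) :
    0 ≤ ∫ x, f x * Real.log (f x) ∂(μm.prod μp) := by
  have h := integral_mono (hf.integrable.sub (integrable_const (1 : ℝ))) hf.integrable_mul_log
    (fun x => sub_one_le_mul_log (hf.nonneg x))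
  simp only [Pi.sub_apply] at h
  rw [integral_sub hf.integrable (integrable_const _), hf.integral_eq_one] at h
  simpa using h

lemma integral_abs_sub_le (hf : IsCouplingDensity μm μp f) (hg : IsCouplingDensity μm μp g)
    {t : ℝ} (ht : 0 < t) :
    ∫ x, |f x - g x| ∂(μm.prod μp) ≤
      ((∫ x, f x * Real.log (f x) ∂(μm.prod μp) + ∫ x, g x * Real.log (g x) ∂(μm.prod μp)) / 2
        - ∫ x, (f x + g x) / 2 * Real.log ((f x + g x) / 2) ∂(μm.prod μp)) / t + 4 * t := by
  have h := integral_abs_sub_le_entropy_gap hf.measurable hg.measurable hf.nonneg hg.nonneg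
    hf.integrable hg.integrable hf.integrable_mul_log hg.integrable_mul_log ht
  rw [hf.integral_eq_one, hg.integral_eq_one] at h
  linarith

/-- Two densities of equal entropy whose midpoint has no smaller entropy coincide. -/
lemma densityMeasure_eq (hf : IsCouplingDensity μm μp f) (hg : IsCouplingDensity μm μp g)
    (hfg : ∫ x, g x * Real.log (g x) ∂(μm.prod μp) = ∫ x, f x * Real.log (f x) ∂(μm.prod μp))
    (hm : ∫ x, f x * Real.log (f x) ∂(μm.prod μp) ≤
      ∫ x, (f x + g x) / 2 * Real.log ((f x + g x) / 2) ∂(μm.prod μp)) :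
    densityMeasure (μm.prod μp) f = densityMeasure (μm.prod μp) g := by
  have h0 : ∫ x, |f x - g x| ∂(μm.prod μp) ≤ 0 := by
    refine le_of_forall_pos_le_add fun e he => ?_
    have h := hf.integral_abs_sub_le hg (t := e / 4) (by positivity)
    have h2 : ((∫ x, f x * Real.log (f x) ∂(μm.prod μp)
        + ∫ x, g x * Real.log (g x) ∂(μm.prod μp)) / 2
        - ∫ x, (f x + g x) / 2 * Real.log ((f x + g x) / 2) ∂(μm.prod μp)) / (e / 4) ≤ 0 :=
      div_nonpos_of_nonpos_of_nonneg (by linarith) (by positivity)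
    linarith
  have hae := (integral_eq_zero_iff_of_nonneg (fun x => abs_nonneg (f x - g x))
    (hf.integrable.sub hg.integrable).abs).1
    (h0.antisymm (integral_nonneg fun x => abs_nonneg _))
  refine withDensity_congr_ae ?_
  filter_upwards [hae] with x hx
  rw [sub_eq_zero.1 (abs_eq_zero.1 hx)]

/-- Minimizers of `J + ε H` converge in `L¹`, as `ε → 0⁺`, to a minimizer of `H` among the
minimizers of `J`, where `J` is a linear cost and `H` is the entropy. -/
lemma exists_tendsto_of_isMin {c : α × β → ℝ} (hc : AEStronglyMeasurable c (μm.prod μp))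
    {M : ℝ} (hM : ∀ᵐ x ∂(μm.prod μp), ‖c x‖ ≤ M) {V : ℝ}
    (hV : ∀ f, IsCouplingDensity μm μp f → V ≤ ∫ x, f x * c x ∂(μm.prod μp))
    {F : ℝ → α × β → ℝ} (hF : ∀ ε, IsCouplingDensity μm μp (F ε))
    (hmin : ∀ ε, 0 < ε → ∀ g, IsCouplingDensity μm μp g →
      ∫ x, F ε x * c x ∂(μm.prod μp) + ε * ∫ x, F ε x * Real.log (F ε x) ∂(μm.prod μp) ≤
      ∫ x, g x * c x ∂(μm.prod μp) + ε * ∫ x, g x * Real.log (g x) ∂(μm.prod μp))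
    {f₀ : α × β → ℝ} (hf₀ : IsCouplingDensity μm μp f₀)
    (hf₀V : ∫ x, f₀ x * c x ∂(μm.prod μp) = V) :
    ∃ g, IsCouplingDensity μm μp g ∧ ∫ x, g x * c x ∂(μm.prod μp) = V ∧
      (∀ f, IsCouplingDensity μm μp f → ∫ x, f x * c x ∂(μm.prod μp) = V →
        ∫ x, g x * Real.log (g x) ∂(μm.prod μp) ≤ ∫ x, f x * Real.log (f x) ∂(μm.prod μp)) ∧
      Tendsto (fun ε => ∫ x, |F ε x - g x| ∂(μm.prod μp)) (𝓝[>] 0) (𝓝 0) := by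
  set q := μm.prod μp with hq
  set J : (α × β → ℝ) → ℝ := fun f => ∫ x, f x * c x ∂q with hJ
  set H : (α × β → ℝ) → ℝ := fun f => ∫ x, f x * Real.log (f x) ∂q with hH
  change ∀ f, IsCouplingDensity μm μp f → V ≤ J f at hV
  change ∀ ε, 0 < ε → ∀ g, IsCouplingDensity μm μp g →
    J (F ε) + ε * H (F ε) ≤ J g + ε * H g at hmin
  have hcost : ∀ ε δ, 0 < ε → ε ≤ δ → H (F δ) ≤ H (F ε) ∧ J (F ε) ≤ J (F δ) := by
    intro ε δ hε hεδ
    rcases hεδ.eq_or_lt with rfl | hlt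
    · exact ⟨le_rfl, le_rfl⟩
    have h1 := hmin ε hε _ (hF δ)
    have h2 := hmin δ (hε.trans hlt) _ (hF ε)
    have h3 : H (F δ) ≤ H (F ε) := by
      by_contra! hn
      nlinarith [mul_pos (sub_pos.2 hlt) (sub_pos.2 hn)]
    exact ⟨h3, by nlinarith [mul_le_mul_of_nonneg_left h3 hε.le]⟩
  have hle : ∀ f, IsCouplingDensity μm μp f → J f = V → ∀ ε, 0 < ε → H (F ε) ≤ H f := by
    intro f hf hfV ε hε
    have h1 := hmin ε hε f hf
    have h2 := hV _ (hF ε)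
    exact le_of_mul_le_mul_left (by linarith) hε
  have hmid : ∀ ε δ, 0 < ε → ε ≤ δ → H (F δ) ≤ H fun x => (F ε x + F δ x) / 2 := by
    intro ε δ hε hεδ
    have h1 := hmin δ (hε.trans_le hεδ) _ ((hF ε).midpoint (hF δ))
    have h2 : J (fun x => (F ε x + F δ x) / 2) = (J (F ε) + J (F δ)) / 2 := by
      simp only [hJ]
      rw [← integral_add ((hF ε).integrable.mul_bdd hc hM) ((hF δ).integrable.mul_bdd hc hM),
        ← integral_div]
      congr 1 with x
      ring
    have h3 := (hcost ε δ hε hεδ).2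
    exact le_of_mul_le_mul_left (by linarith) (hε.trans_le hεδ)
  have hcauchy : ∀ e > 0, ∃ s ∈ 𝓝[>] (0 : ℝ), ∀ i ∈ s, ∀ j ∈ s,
      ∫ x, |F i x - F j x| ∂q < e := by
    intro e he
    have hbdd : BddAbove ((fun ε => H (F ε)) '' Ioi 0) := by
      refine ⟨H f₀, ?_⟩
      rintro _ ⟨ε, hε, rfl⟩
      exact hle f₀ hf₀ hf₀V ε hε
    obtain ⟨_, ⟨δ₀, hδ₀, rfl⟩, hlt⟩ := exists_lt_of_lt_csSup
      (Set.Nonempty.image (fun ε => H (F ε)) (nonempty_Ioi (a := (0 : ℝ))))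
      (sub_lt_self (sSup ((fun ε => H (F ε)) '' Ioi 0)) (by positivity : 0 < e * e / 16))
    have key : ∀ ε δ, 0 < ε → ε ≤ δ → δ ≤ δ₀ → ∫ x, |F ε x - F δ x| ∂q < e := by
      intro ε δ hε hεδ hδ
      have h1 := (hF ε).integral_abs_sub_le (hF δ) (t := e / 8) (by positivity)
      have h2 := hmid ε δ hε hεδ
      have h3 := (hcost δ δ₀ (hε.trans_le hεδ) hδ).1
      have h4 : H (F ε) ≤ sSup ((fun ε => H (F ε)) '' Ioi 0) :=
        le_csSup hbdd (mem_image_of_mem _ hε)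
      have h5 : ((H (F ε) + H (F δ)) / 2 - H fun x => (F ε x + F δ x) / 2) / (e / 8) ≤ e / 4 := by
        rw [div_le_iff₀ (by positivity)]
        linarith
      change _ ≤ ((H (F ε) + H (F δ)) / 2 - H fun x => (F ε x + F δ x) / 2) / (e / 8) + _ at h1
      linarith
    refine ⟨Ioc 0 δ₀, Ioc_mem_nhdsGT hδ₀, fun i hi j hj => ?_⟩
    rcases le_total i j with hij | hij
    · exact key i j hi.1 hij hj.2
    · simp only [abs_sub_comm (F i _)]
      exact key j i hj.1 hij hi.2
  obtain ⟨g, hgm, hg0, hgi, hlim⟩ := exists_tendsto_integral_abs_sub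
    (fun ε => (hF ε).integrable) (fun ε => (hF ε).nonneg) hcauchy
  have hent : ∀ f, IsCouplingDensity μm μp f → J f = V →
      Integrable (fun x => g x * Real.log (g x)) q ∧ H g ≤ H f := fun f hf hfV =>
    entropy_le_of_tendsto (fun ε => (hF ε).measurable) (fun ε => (hF ε).nonneg)
      (fun ε => (hF ε).integrable) hgm hg0 hgi hlim
      (eventually_mem_nhdsWithin.mono fun ε hε =>
        ⟨(hF ε).integrable_mul_log, hle f hf hfV ε hε⟩)
  have hg : IsCouplingDensity μm μp g :=
    { measurable := hgm
      nonneg := hg0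
      integrable := hgi
      integrable_mul_log := (hent f₀ hf₀ hf₀V).1
      fst_eq := map_densityMeasure_of_tendsto (fun ε => (hF ε).nonneg) hg0
        (fun ε => (hF ε).integrable) hgi hlim measurable_fst
        (Eventually.of_forall fun ε => (hF ε).fst_eq)
      snd_eq := map_densityMeasure_of_tendsto (fun ε => (hF ε).nonneg) hg0
        (fun ε => (hF ε).integrable) hgi hlim measurable_snd
        (Eventually.of_forall fun ε => (hF ε).snd_eq) }
  refine ⟨g, hg, le_antisymm ?_ (hV g hg), fun f hf hfV => (hent f hf hfV).2, hlim⟩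
  have hJlim := tendsto_integral_mul_of_tendsto_integral_abs_sub
    (fun ε => (hF ε).integrable) hgi hlim hc hM
  have hVlim : Tendsto (fun ε : ℝ => V + ε * H f₀) (𝓝[>] 0) (𝓝 V) := by
    have h : Tendsto (fun ε : ℝ => V + ε * H f₀) (𝓝 0) (𝓝 (V + 0 * H f₀)) :=
      (continuous_const.add (continuous_id.mul continuous_const)).tendsto 0
    rw [zero_mul, add_zero] at h
    exact h.mono_left nhdsWithin_le_nhds
  refine le_of_tendsto_of_tendsto hJlim hVlim ?_
  filter_upwards [self_mem_nhdsWithin] with ε hε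
  have h1 := hmin ε hε f₀ hf₀
  have h2 : 0 ≤ ε * H (F ε) := mul_nonneg (le_of_lt hε) (hF ε).entropy_nonneg
  change J f₀ = V at hf₀V
  change J (F ε) ≤ _
  linarith

end IsCouplingDensity

lemma exists_isCouplingDensity [IsProbabilityMeasure μm] [IsProbabilityMeasure μp]
    {ν : Measure (α × β)} (hm : ν.fst = μm) (hp : ν.snd = μp) (h : Ent ν (μm.prod μp) ≠ ⊤) :
    ∃ f, IsCouplingDensity μm μp f ∧ ν = densityMeasure (μm.prod μp) f := by
  have : IsFiniteMeasure ν := ⟨by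
    rw [← Measure.fst_univ, hm]
    exact measure_lt_top _ _⟩
  obtain ⟨f, hf, hf0, hfi, rfl, hfl⟩ := exists_eq_densityMeasure_of_Ent_ne_top h
  exact ⟨f, ⟨hf, hf0, hfi, hfl, hm, hp⟩, rfl⟩

lemma isProbabilityMeasure_of_fst_eq [IsProbabilityMeasure μm] {ν : Measure (α × β)}
    (hm : ν.fst = μm) : IsProbabilityMeasure ν :=
  ⟨by rw [← Measure.fst_univ, hm, measure_univ]⟩

lemma entCost_le {c : α × β → ℝ} {ε : ℝ} [IsProbabilityMeasure μm] {ν : Measure (α × β)}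
    (hm : ν.fst = μm) (hp : ν.snd = μp) :
    entCost μm μp c ε ≤ ((∫ p, c p ∂ν : ℝ) : EReal) + (ε : EReal) * Ent ν (μm.prod μp) :=
  sInf_le ⟨ν, isProbabilityMeasure_of_fst_eq hm, hm, hp, rfl⟩

lemma IsCouplingDensity.Ent_eq [IsProbabilityMeasure μm] [IsProbabilityMeasure μp]
    {f : α × β → ℝ} (hf : IsCouplingDensity μm μp f) :
    Ent (densityMeasure (μm.prod μp) f) (μm.prod μp)
      = ((∫ x, f x * Real.log (f x) ∂(μm.prod μp) : ℝ) : EReal) :=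
  Ent_densityMeasure hf.measurable hf.nonneg hf.integrable_mul_log

lemma IsCouplingDensity.entCost_le [IsProbabilityMeasure μm] [IsProbabilityMeasure μp]
    {f c : α × β → ℝ} (hf : IsCouplingDensity μm μp f) (ε : ℝ) :
    entCost μm μp c ε ≤ ((∫ x, f x * c x ∂(μm.prod μp)
      + ε * ∫ x, f x * Real.log (f x) ∂(μm.prod μp) : ℝ) : EReal) := by
  refine (_root_.entCost_le hf.fst_eq hf.snd_eq).trans_eq ?_
  rw [hf.Ent_eq, integral_densityMeasure hf.measurable hf.nonneg]
  norm_cast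

end Coupling

lemma ae_mem_msupport_prod {α β : Type*} [TopologicalSpace α] [SecondCountableTopology α]
    [MeasurableSpace α] [TopologicalSpace β] [SecondCountableTopology β] [MeasurableSpace β]
    (μ : Measure α) (ν : Measure β) [SFinite μ] [SFinite ν] :
    ∀ᵐ p ∂(μ.prod ν), p ∈ msupport μ ×ˢ msupport ν := by
  have h1 : ∀ᵐ x ∂μ, x ∈ msupport μ := measure_compl_msupport μ
  have h2 : ∀ᵐ y ∂ν, y ∈ msupport ν := measure_compl_msupport ν
  filter_upwards [Measure.quasiMeasurePreserving_fst.ae h1,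
    Measure.quasiMeasurePreserving_snd.ae h2] with p hp1 hp2 using ⟨hp1, hp2⟩

/-- If some optimal transport plan has finite entropy, there is a unique entropy-minimizing
optimal plan `γ*`, and the optimal entropic plans `γ_ε` converge narrowly to `γ*` as
`ε → 0⁺`. -/
theorem entropic_plans_converge_narrowly {d : ℕ}
    (μm μp : Measure (EuclideanSpace ℝ (Fin d)))
    [IsProbabilityMeasure μm] [IsProbabilityMeasure μp]
    (hXm : IsCompact (msupport μm)) (hXp : IsCompact (msupport μp))
    (c : EuclideanSpace ℝ (Fin d) × EuclideanSpace ℝ (Fin d) → ℝ)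
    (hc : ContinuousOn c (msupport μm ×ˢ msupport μp))
    (Opt : Set (Measure (EuclideanSpace ℝ (Fin d) × EuclideanSpace ℝ (Fin d))))
    (hOpt : Opt = {γ | IsProbabilityMeasure γ ∧ γ.fst = μm ∧ γ.snd = μp ∧
      ((∫ p, c p ∂γ : ℝ) : EReal) = entCost μm μp c 0})
    (hfinite : ∃ γ0 ∈ Opt, Ent γ0 (μm.prod μp) ≠ ⊤)
    (γ : ℝ → Measure (EuclideanSpace ℝ (Fin d) × EuclideanSpace ℝ (Fin d)))
    (hγ : ∀ ε : ℝ, 0 < ε → IsProbabilityMeasure (γ ε) ∧ (γ ε).fst = μm ∧ (γ ε).snd = μp ∧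
      ((∫ p, c p ∂(γ ε) : ℝ) : EReal) + (ε : EReal) * Ent (γ ε) (μm.prod μp)
        = entCost μm μp c ε) :
    ∃ γs, (γs ∈ Opt ∧ ∀ γ' ∈ Opt, Ent γs (μm.prod μp) ≤ Ent γ' (μm.prod μp)) ∧
      (∀ γ', (γ' ∈ Opt ∧ ∀ γ'' ∈ Opt, Ent γ' (μm.prod μp) ≤ Ent γ'' (μm.prod μp)) → γ' = γs) ∧
      ∀ f : BoundedContinuousFunction
          (EuclideanSpace ℝ (Fin d) × EuclideanSpace ℝ (Fin d)) ℝ,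
        Tendsto (fun ε : ℝ => ∫ p, f p ∂(γ ε)) (nhdsWithin 0 (Set.Ioi 0))
          (nhds (∫ p, f p ∂γs)) := by
  have hS := hXm.prod hXp
  have hae := ae_mem_msupport_prod μm μp
  have hcm : AEStronglyMeasurable c (μm.prod μp) := by
    have h := hc.aestronglyMeasurable (μ := μm.prod μp) hS.measurableSet
    rwa [Measure.restrict_eq_self_of_ae_mem hae] at h
  obtain ⟨M, hM⟩ := hS.exists_bound_of_continuousOn hc
  have hcM : ∀ᵐ p ∂(μm.prod μp), ‖c p‖ ≤ M := hae.mono hM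
  obtain ⟨γ0, hγ0, hfin0⟩ := hfinite
  simp only [hOpt, mem_ofPred_eq] at hγ0
  obtain ⟨-, hm0, hp0, hcost0⟩ := hγ0
  obtain ⟨f₀, hf₀, rfl⟩ := exists_isCouplingDensity hm0 hp0 hfin0
  rw [integral_densityMeasure hf₀.measurable hf₀.nonneg] at hcost0
  set V := ∫ p, f₀ p * c p ∂(μm.prod μp) with hVdef
  have hV : ∀ f, IsCouplingDensity μm μp f → V ≤ ∫ p, f p * c p ∂(μm.prod μp) := by
    intro f hf
    have h := hf.entCost_le (c := c) 0
    rw [← hcost0, EReal.coe_le_coe_iff] at h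
    linarith
  have hmem : ∀ f, IsCouplingDensity μm μp f →
      (densityMeasure (μm.prod μp) f ∈ Opt ↔ ∫ p, f p * c p ∂(μm.prod μp) = V) := by
    intro f hf
    simp only [hOpt, mem_ofPred_eq, ← hcost0, EReal.coe_eq_coe_iff,
      integral_densityMeasure hf.measurable hf.nonneg]
    exact ⟨fun h => h.2.2.2,
      fun h => ⟨isProbabilityMeasure_of_fst_eq hf.fst_eq, hf.fst_eq, hf.snd_eq, h⟩⟩
  have hvar : ∀ ε : ℝ, ∃ f, IsCouplingDensity μm μp f ∧ (0 < ε →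
      γ ε = densityMeasure (μm.prod μp) f ∧ ∀ g, IsCouplingDensity μm μp g →
      ∫ x, f x * c x ∂(μm.prod μp) + ε * ∫ x, f x * Real.log (f x) ∂(μm.prod μp) ≤
      ∫ x, g x * c x ∂(μm.prod μp) + ε * ∫ x, g x * Real.log (g x) ∂(μm.prod μp)) := by
    intro ε
    rcases le_or_gt ε 0 with hε | hε
    · exact ⟨f₀, hf₀, fun h => absurd h hε.not_gt⟩
    obtain ⟨-, hm, hp, hcost⟩ := hγ ε hε
    have hfin : Ent (γ ε) (μm.prod μp) ≠ ⊤ := by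
      intro htop
      have h := hf₀.entCost_le (c := c) ε
      rw [← hcost, htop, EReal.coe_mul_top_of_pos hε, EReal.coe_add_top] at h
      exact EReal.coe_ne_top _ (top_le_iff.1 h)
    obtain ⟨f, hf, hγf⟩ := exists_isCouplingDensity hm hp hfin
    refine ⟨f, hf, fun _ => ⟨hγf, fun g hg => ?_⟩⟩
    have h := hg.entCost_le (c := c) ε
    rw [← hcost, hγf, hf.Ent_eq, integral_densityMeasure hf.measurable hf.nonneg] at h
    exact_mod_cast h
  choose F hF hFγ using hvar
  obtain ⟨g, hg, hgV, hgmin, hlim⟩ := IsCouplingDensity.exists_tendsto_of_isMin hcm hcM hV hF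
    (fun ε hε => (hFγ ε hε).2) hf₀ hVdef.symm
  have hgOpt := (hmem g hg).2 hgV
  have hgle : ∀ γ' ∈ Opt, Ent (densityMeasure (μm.prod μp) g) (μm.prod μp)
      ≤ Ent γ' (μm.prod μp) := by
    intro γ' hγ'
    by_cases htop : Ent γ' (μm.prod μp) = ⊤
    · rw [htop]
      exact le_top
    have hγ'' := hγ'
    rw [hOpt] at hγ''
    obtain ⟨f, hf, rfl⟩ := exists_isCouplingDensity hγ''.2.1 hγ''.2.2.1 htop
    rw [hg.Ent_eq, hf.Ent_eq, EReal.coe_le_coe_iff]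
    exact hgmin f hf ((hmem f hf).1 hγ')
  refine ⟨densityMeasure (μm.prod μp) g, ⟨hgOpt, hgle⟩, ?_, fun f => ?_⟩
  · rintro γ' ⟨hγ', hmin'⟩
    have hEnt := (hmin' _ hgOpt).antisymm (hgle γ' hγ')
    have hγ'' := hγ'
    rw [hOpt] at hγ''
    obtain ⟨f, hf, rfl⟩ := exists_isCouplingDensity hγ''.2.1 hγ''.2.2.1
      (by rw [hEnt, hg.Ent_eq]; exact EReal.coe_ne_top _)
    have hfV := (hmem f hf).1 hγ'
    rw [hf.Ent_eq, hg.Ent_eq, EReal.coe_eq_coe_iff] at hEnt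
    refine hf.densityMeasure_eq hg hEnt.symm (hEnt.trans_le (hgmin _ (hf.midpoint hg) ?_))
    have h : ∀ p, (f p + g p) / 2 * c p = (f p * c p + g p * c p) / 2 := fun p => by ring
    simp only [h]
    rw [integral_div, integral_add (hf.integrable.mul_bdd hcm hcM)
      (hg.integrable.mul_bdd hcm hcM), hfV, hgV, add_self_div_two]
  · rw [integral_densityMeasure hg.measurable hg.nonneg]
    refine (tendsto_integral_mul_of_tendsto_integral_abs_sub (fun ε => (hF ε).integrable)
      hg.integrable hlim f.continuous.aestronglyMeasurable
      (Eventually.of_forall f.norm_coe_le_norm)).congr' ?_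
    filter_upwards [self_mem_nhdsWithin] with ε hε
    rw [(hFγ ε hε).1, integral_densityMeasure (hF ε).measurable (hF ε).nonneg]
end
end

section
/- Let μ⁻, μ⁺ be probability measures on ℝ^d with compact supports X⁻, X⁺ and let c : X⁻ × X⁺ → ℝ be Lipschitz with constant L with respect to the norm ‖(x,y)‖ = max(|x|,|y|) on ℝ^d × ℝ^d. Then for every ε > 0: v_ε ≤ v_0 + ε·min(H_ε(μ⁻), H_ε(μ⁺)) + L·ε. -/
open MeasureTheory Real Set Filter Classical
open scoped ENNReal NNReal Topology

noncomputable section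

/-- `H_δ(μ)`: infimum over countable Borel coverings of the space by sets of diameter `≤ δ`
of `Σ_n μ(A_n) log(1/μ(A_n))`, with values in `ℝ≥0∞`. -/
def entH {α : Type*} [MeasurableSpace α] [PseudoEMetricSpace α] (δ : ℝ) (μ : Measure α) : ℝ≥0∞ :=
  ⨅ (A : ℕ → Set α) (_ : (∀ n, MeasurableSet (A n)) ∧
      (∀ n, EMetric.diam (A n) ≤ ENNReal.ofReal δ) ∧ (⋃ n, A n) = Set.univ),
    ∑' n, ENNReal.ofReal (Real.negMulLog ((μ (A n)).toReal))

/-- The chord bound for `negMulLog` on `[1/2, 1]`. -/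
lemma mul_log_two_le_negMulLog_one_sub {u : ℝ} (h0 : 0 ≤ u) (h1 : u ≤ 1 / 2) :
    u * Real.log 2 ≤ Real.negMulLog (1 - u) := by
  have h := Real.concaveOn_negMulLog.2 (show (1 / 2 : ℝ) ∈ Set.Ici 0 by norm_num)
    (show (1 : ℝ) ∈ Set.Ici 0 by norm_num) (show 0 ≤ 2 * u by linarith)
    (show 0 ≤ 1 - 2 * u by linarith) (by ring)
  have e : Real.negMulLog (1 / 2) = Real.log 2 / 2 := by
    simp [Real.negMulLog]; ring
  simp only [smul_eq_mul, e, Real.negMulLog_one] at h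
  rw [show (2 * u * (1 / 2) + (1 - 2 * u) * 1 : ℝ) = 1 - u by ring] at h
  linarith

lemma negMulLog_le_half {b : ℝ} (h0 : 0 < b) (h1 : b < 1 / 2) :
    Real.negMulLog b ≤ Real.log 2 / 2 + (1 / 2 - b) * (-Real.log (1 - b)) := by
  have l1 := Real.log_two_gt_d9
  have l2 := Real.log_two_lt_d9
  have k1 : Real.log (1 - b) ≤ -b := by
    have := Real.log_le_sub_one_of_pos (show 0 < 1 - b by linarith)
    linarith
  have k2 : (1 / 2 - b) * b ≤ (1 / 2 - b) * (-Real.log (1 - b)) :=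
    mul_le_mul_of_nonneg_left (by linarith) (by linarith)
  have f1 : b - 1 / 2 - b * Real.log 2 ≤ b * Real.log b := by
    have h := Real.log_le_sub_one_of_pos (show 0 < (2 * b)⁻¹ by positivity)
    rw [Real.log_inv, Real.log_mul (by norm_num) h0.ne'] at h
    have := mul_le_mul_of_nonneg_left h h0.le
    have e : b * ((2 * b)⁻¹ - 1) = 1 / 2 - b := by field_simp
    rw [e] at this
    linarith
  have f2 : b - 1 / 4 - 2 * b * Real.log 2 ≤ b * Real.log b := by
    have h := Real.log_le_sub_one_of_pos (show 0 < (2 * (2 * b))⁻¹ by positivity)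
    rw [Real.log_inv, Real.log_mul (by norm_num) (by positivity),
      Real.log_mul (by norm_num) h0.ne'] at h
    have := mul_le_mul_of_nonneg_left h h0.le
    have e : b * ((2 * (2 * b))⁻¹ - 1) = 1 / 4 - b := by field_simp; ring
    rw [e] at this
    linarith
  simp only [Real.negMulLog]
  rcases le_total b (0.3069 : ℝ) with hb | hb
  · nlinarith
  · nlinarith

lemma negMulLog_le_add_of_le_half {a b : ℝ} (h0 : 0 < b) (hab : b ≤ a) (ha : a ≤ 1 / 2) :
    Real.negMulLog b ≤ Real.negMulLog a + (a - b) * (-Real.log (1 - b)) := by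
  rcases hab.eq_or_lt with rfl | hlt
  · simp
  have hb : b < 1 / 2 := by linarith
  have hd : 0 < 1 / 2 - b := by linarith
  set t := (a - b) / (1 / 2 - b) with ht
  have ht0 : 0 ≤ t := div_nonneg (by linarith) hd.le
  have ht1 : t ≤ 1 := (div_le_one hd).2 (by linarith)
  have hta : t * (1 / 2 - b) = a - b := div_mul_cancel₀ _ hd.ne'
  have h := Real.concaveOn_negMulLog.2 (show b ∈ Set.Ici 0 from h0.le)
    (show (1 / 2 : ℝ) ∈ Set.Ici 0 by norm_num) (show 0 ≤ 1 - t by linarith) ht0 (by ring)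
  have e : Real.negMulLog (1 / 2) = Real.log 2 / 2 := by
    simp [Real.negMulLog]; ring
  simp only [smul_eq_mul, e] at h
  rw [show ((1 - t) * b + t * (1 / 2) : ℝ) = a by linarith] at h
  have := mul_le_mul_of_nonneg_left (negMulLog_le_half h0 hb) ht0
  rw [← hta]
  linarith

lemma exists_weight_of_half_lt {u v : ℝ} (hu : 0 < u) (hv : 1 / 2 < v) (huv : u + v ≤ 1) :
    u * (-Real.log u) + v * (-Real.log (1 - u)) ≤
      Real.negMulLog (1 - u) + Real.negMulLog (1 - v) := by
  have h := negMulLog_le_add_of_le_half hu (show u ≤ 1 - v by linarith) (by linarith)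
  simp only [Real.negMulLog] at h ⊢
  linarith

/-- The two-set inequality: two sets whose complements have masses `u`, `v` admit a choice of
weights `s`, `1 - s` of cost at most the sum of their `negMulLog`, up to `η`. -/
lemma exists_weight {u v η : ℝ} (hu : 0 ≤ u) (hv : 0 ≤ v) (huv : u + v ≤ 1) (hη : 0 < η) :
    ∃ s : ℝ, 0 < s ∧ s < 1 ∧ u * (-Real.log s) + v * (-Real.log (1 - s)) ≤
      Real.negMulLog (1 - u) + Real.negMulLog (1 - v) + η := by
  have n1 : 0 ≤ Real.negMulLog (1 - u) := Real.negMulLog_nonneg (by linarith) (by linarith)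
  have n2 : 0 ≤ Real.negMulLog (1 - v) := Real.negMulLog_nonneg (by linarith) (by linarith)
  have e0 := Real.exp_pos (-η)
  have e1 : Real.exp (-η) < 1 := by rw [Real.exp_lt_one_iff]; linarith
  rcases hu.eq_or_lt with rfl | hu'
  · refine ⟨1 - Real.exp (-η), by linarith, by linarith, ?_⟩
    rw [sub_sub_cancel, Real.log_exp]
    nlinarith
  rcases hv.eq_or_lt with rfl | hv'
  · refine ⟨Real.exp (-η), e0, e1, ?_⟩
    rw [Real.log_exp]
    nlinarith
  rcases lt_or_ge (1 / 2) v with h | h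
  · exact ⟨u, hu', by linarith, by linarith [exists_weight_of_half_lt hu' h huv]⟩
  rcases lt_or_ge (1 / 2) u with h' | h'
  · refine ⟨1 - v, by linarith, by linarith, ?_⟩
    have := exists_weight_of_half_lt hv' h' (by linarith)
    rw [sub_sub_cancel]
    linarith
  · refine ⟨1 / 2, by norm_num, by norm_num, ?_⟩
    have h1 := mul_log_two_le_negMulLog_one_sub hu h'
    have h2 := mul_log_two_le_negMulLog_one_sub hv h
    rw [show (1 - 1 / 2 : ℝ) = 1 / 2 by norm_num, one_div, Real.log_inv]
    linarith

/-- The total weight `w(S_x)` of the indices `n < K` of the sets `A n` that contain `x`. -/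
def coverWeight {α : Type*} (A : ℕ → Set α) (w : ℕ → ℝ) (K : ℕ) (x : α) : ℝ :=
  ∑ n ∈ Finset.range K, (A n).indicator (fun _ => w n) x

lemma coverWeight_nonneg {α : Type*} (A : ℕ → Set α) {w : ℕ → ℝ} (hw : ∀ n, 0 ≤ w n) (K : ℕ)
    (x : α) : 0 ≤ coverWeight A w K x :=
  Finset.sum_nonneg fun n _ => Set.indicator_nonneg (fun _ _ => hw n) x

lemma coverWeight_le_one {α : Type*} (A : ℕ → Set α) {w : ℕ → ℝ} (hw : ∀ n, 0 ≤ w n) {K : ℕ}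
    (hs : ∑ n ∈ Finset.range K, w n ≤ 1) (x : α) : coverWeight A w K x ≤ 1 :=
  (Finset.sum_le_sum fun n _ => Set.indicator_le_self' (fun _ _ => hw n) x).trans hs

lemma measurable_coverWeight {α : Type*} [MeasurableSpace α] {A : ℕ → Set α}
    (hA : ∀ n, MeasurableSet (A n)) (w : ℕ → ℝ) (K : ℕ) : Measurable (coverWeight A w K) :=
  Finset.measurable_fun_sum _ fun n _ => measurable_const.indicator (hA n)

lemma integrableOn_neg_log {α : Type*} [MeasurableSpace α] {μ : Measure α} [IsFiniteMeasure μ]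
    {f : α → ℝ} (hf : Measurable f) {U : Set α} (hU : MeasurableSet U) {κ : ℝ} (hκ : 0 < κ)
    (h : ∀ x ∈ U, κ ≤ f x) (h1 : ∀ x, f x ≤ 1) :
    IntegrableOn (fun x => -Real.log (f x)) U μ := by
  refine Integrable.of_bound (C := -Real.log κ) hf.log.neg.aestronglyMeasurable ?_
  filter_upwards [ae_restrict_mem hU] with x hx
  have hx0 := h x hx
  rw [Real.norm_eq_abs, abs_neg, abs_of_nonpos (Real.log_nonpos (hκ.le.trans hx0) (h1 x))]
  exact neg_le_neg (Real.log_le_log hκ hx0)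

lemma exists_coverWeight {α : Type*} [MeasurableSpace α] (μ : Measure α) [IsProbabilityMeasure μ]
    {A : ℕ → Set α} (hA : ∀ n, MeasurableSet (A n)) (K : ℕ) :
    ∀ η : ℝ, 0 < η → ∃ w : ℕ → ℝ, (∀ n, 0 ≤ w n) ∧ ∑ n ∈ Finset.range K, w n ≤ 1 ∧
      ∃ κ : ℝ, 0 < κ ∧ (∀ x ∈ ⋃ n ∈ Finset.range K, A n, κ ≤ coverWeight A w K x) ∧
        ∫ x in ⋃ n ∈ Finset.range K, A n, -Real.log (coverWeight A w K x) ∂μ ≤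
          ∑ n ∈ Finset.range K, (Real.negMulLog (μ.real (A n)) +
            μ.real (A n) * Real.log (μ.real (⋃ n ∈ Finset.range K, A n))) + η := by
  induction K with
  | zero =>
    intro η hη
    exact ⟨fun _ => 0, fun _ => le_rfl, by simp, 1, one_pos, by simp, by simpa using hη.le⟩
  | succ K ih =>
    intro η hη
    obtain ⟨w, hw0, hw1, κ, hκ, hκU, hint⟩ := ih (η / 2) (by linarith)
    have hsum : μ.real (⋃ n ∈ Finset.range K, A n) ≤ ∑ n ∈ Finset.range K, μ.real (A n) :=
      measureReal_biUnion_finset_le _ _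
    have hUm : MeasurableSet (⋃ n ∈ Finset.range K, A n) :=
      Finset.measurableSet_biUnion _ fun n _ => hA n
    have hset : (⋃ n ∈ Finset.range (K + 1), A n) = A K ∪ ⋃ n ∈ Finset.range K, A n := by
      rw [Finset.range_add_one, Finset.set_biUnion_insert]
    rw [hset]
    set U := ⋃ n ∈ Finset.range K, A n with hU
    set V := A K ∪ U with hV
    have hVm : MeasurableSet V := (hA K).union hUm
    set m := μ.real V with hm
    set a := μ.real (A K) with ha
    have hb : μ.real (A K \ U) = m - μ.real U := by
      rw [hm, hV, ← measureReal_sdiff_add_inter (s := A K ∪ U) (t := U) hUm,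
        Set.union_sdiff_right, Set.union_inter_cancel_right]
      ring
    have hc : μ.real (U \ A K) = m - a := by
      rw [hm, hV, ha, ← measureReal_sdiff_add_inter (s := A K ∪ U) (t := A K) (hA K),
        Set.union_sdiff_left, Set.union_inter_cancel_left]
      ring
    have hb0 : 0 ≤ m - μ.real U := hb ▸ measureReal_nonneg
    have hc0 : 0 ≤ m - a := hc ▸ measureReal_nonneg
    have ha0 : 0 ≤ a := measureReal_nonneg
    have hu0 : 0 ≤ μ.real U := measureReal_nonneg
    have hm0 : 0 ≤ m := measureReal_nonneg
    have hm1 : m ≤ 1 := measureReal_le_one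
    have hmle : m ≤ a + μ.real U := measureReal_union_le _ _
    obtain ⟨s, hs0, hs1, hs⟩ : ∃ s : ℝ, 0 < s ∧ s < 1 ∧
        (m - μ.real U) * (-Real.log s) + (m - a) * (-Real.log (1 - s)) ≤
          Real.negMulLog a + a * Real.log m + μ.real U * (Real.log m - Real.log (μ.real U))
            + η / 2 := by
      rcases hm0.eq_or_lt with h | h
      · refine ⟨1 / 2, by norm_num, by norm_num, ?_⟩
        have h1 : a = 0 := by linarith
        have h2 : μ.real U = 0 := by linarith
        rw [← h, h1, h2]
        simpa using (half_pos hη).le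
      · obtain ⟨s, hs0, hs1, hs⟩ := exists_weight (u := (m - μ.real U) / m) (v := (m - a) / m)
          (η := η / 2) (div_nonneg hb0 hm0) (div_nonneg hc0 hm0)
          (by rw [← add_div, div_le_one h]; linarith) (by linarith)
        refine ⟨s, hs0, hs1, ?_⟩
        have key : ∀ t, 0 ≤ t → m * Real.negMulLog (1 - (m - t) / m) =
            t * Real.log m - t * Real.log t := by
          intro t ht
          have e : 1 - (m - t) / m = t / m := by field_simp; ring
          rw [e, Real.negMulLog]
          rcases ht.eq_or_lt with rfl | ht
          · simp
          rw [Real.log_div ht.ne' h.ne']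
          field_simp
          ring
        have h3 := mul_le_mul_of_nonneg_left hs hm0
        rw [mul_add, mul_add, mul_add, key _ ha0, key _ hu0, ← mul_assoc, ← mul_assoc,
          mul_div_cancel₀ _ h.ne', mul_div_cancel₀ _ h.ne'] at h3
        have h4 : m * (η / 2) ≤ η / 2 := mul_le_of_le_one_left (by linarith) hm1
        rw [Real.negMulLog]
        linarith
    set w' : ℕ → ℝ := Function.update (fun n => (1 - s) * w n) K s with hw'
    have hw'K : w' K = s := Function.update_self ..
    have hw'n : ∀ n ∈ Finset.range K, w' n = (1 - s) * w n := fun n hn =>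
      Function.update_of_ne (by have := Finset.mem_range.1 hn; omega) ..
    have hw'0 : ∀ n, 0 ≤ w' n := by
      intro n
      rcases eq_or_ne n K with rfl | hn
      · rw [hw'K]; exact hs0.le
      · rw [hw', Function.update_of_ne hn]
        exact mul_nonneg (by linarith) (hw0 n)
    have hw'1 : ∑ n ∈ Finset.range (K + 1), w' n ≤ 1 := by
      rw [Finset.sum_range_succ, hw'K, Finset.sum_congr rfl hw'n, ← Finset.mul_sum]
      nlinarith
    have hW : ∀ x, coverWeight A w' (K + 1) x =
        (1 - s) * coverWeight A w K x + (A K).indicator (fun _ => s) x := by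
      intro x
      rw [coverWeight, Finset.sum_range_succ, hw'K, coverWeight, Finset.mul_sum]
      congr 1
      refine Finset.sum_congr rfl fun n hn => ?_
      rw [hw'n n hn]
      by_cases hx : x ∈ A n <;> simp [hx]
    have hWU : ∀ x, coverWeight A w K x ≤ 1 := coverWeight_le_one A hw0 hw1
    have hWn : ∀ x, 0 ≤ coverWeight A w K x := coverWeight_nonneg A hw0 K
    have hκ' : 0 < min s ((1 - s) * κ) := lt_min hs0 (mul_pos (by linarith) hκ)
    have hκV : ∀ x ∈ V, min s ((1 - s) * κ) ≤ coverWeight A w' (K + 1) x := by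
      intro x hx
      rw [hW]
      by_cases hxA : x ∈ A K
      · rw [Set.indicator_of_mem hxA]
        have := mul_nonneg (sub_nonneg.2 hs1.le) (hWn x)
        exact (min_le_left _ _).trans (by linarith)
      · rw [Set.indicator_of_notMem hxA, add_zero]
        exact (min_le_right _ _).trans (mul_le_mul_of_nonneg_left
          (hκU x (hx.resolve_left hxA)) (by linarith))
    refine ⟨w', hw'0, hw'1, _, hκ', hκV, ?_⟩
    have iU : IntegrableOn (fun x => -Real.log (coverWeight A w K x)) U μ :=
      integrableOn_neg_log (measurable_coverWeight hA w K) hUm hκ hκU hWU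
    have iV : IntegrableOn (fun x => -Real.log (coverWeight A w' (K + 1) x)) V μ :=
      integrableOn_neg_log (measurable_coverWeight hA w' (K + 1)) hVm hκ' hκV
        (coverWeight_le_one A hw'0 hw'1)
    have i1 : Integrable ((A K \ U).indicator fun _ => -Real.log s) μ :=
      (integrable_const _).indicator ((hA K).diff hUm)
    have i2 : Integrable ((U \ A K).indicator fun _ => -Real.log (1 - s)) μ :=
      (integrable_const _).indicator (hUm.diff (hA K))
    have i3 : Integrable (U.indicator fun x => -Real.log (coverWeight A w K x)) μ :=
      iU.integrable_indicator hUm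
    have hle : ∀ x, V.indicator (fun x => -Real.log (coverWeight A w' (K + 1) x)) x ≤
        (A K \ U).indicator (fun _ => -Real.log s) x +
          (U \ A K).indicator (fun _ => -Real.log (1 - s)) x +
          U.indicator (fun x => -Real.log (coverWeight A w K x)) x := by
      intro x
      have hs1' : 0 < 1 - s := by linarith
      by_cases hxA : x ∈ A K <;> by_cases hxU : x ∈ U
      · have hxV : x ∈ V := Or.inl hxA
        have hpos : 0 < coverWeight A w K x := hκ.trans_le (hκU x hxU)
        simp only [Set.indicator_of_mem hxV, hW, Set.indicator_of_mem hxA,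
          Set.indicator_of_mem hxU, Set.mem_sdiff, hxA, hxU, not_true_eq_false, and_false,
          not_false_eq_true, Set.indicator_of_notMem, zero_add]
        refine neg_le_neg (Real.log_le_log hpos ?_)
        nlinarith [hWU x]
      · have hxV : x ∈ V := Or.inl hxA
        have h1 : x ∈ A K \ U := ⟨hxA, hxU⟩
        have h2 : x ∉ U \ A K := fun h => hxU h.1
        rw [Set.indicator_of_mem hxV, Set.indicator_of_mem h1, Set.indicator_of_notMem h2,
          Set.indicator_of_notMem hxU, hW, Set.indicator_of_mem hxA, add_zero, add_zero]
        refine neg_le_neg (Real.log_le_log hs0 ?_)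
        have := mul_nonneg hs1'.le (hWn x)
        linarith
      · have hxV : x ∈ V := Or.inr hxU
        have h1 : x ∉ A K \ U := fun h => hxA h.1
        have h2 : x ∈ U \ A K := ⟨hxU, hxA⟩
        have hpos : 0 < coverWeight A w K x := hκ.trans_le (hκU x hxU)
        rw [Set.indicator_of_mem hxV, Set.indicator_of_notMem h1, Set.indicator_of_mem h2,
          Set.indicator_of_mem hxU, hW, Set.indicator_of_notMem hxA, add_zero, zero_add,
          Real.log_mul hs1'.ne' hpos.ne']
        linarith
      · have hxV : x ∉ V := fun h => h.elim hxA hxU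
        have h1 : x ∉ A K \ U := fun h => hxA h.1
        have h2 : x ∉ U \ A K := fun h => hxU h.1
        rw [Set.indicator_of_notMem hxV, Set.indicator_of_notMem h1,
          Set.indicator_of_notMem h2, Set.indicator_of_notMem hxU]
        simp
    have hI : ∫ x in V, -Real.log (coverWeight A w' (K + 1) x) ∂μ ≤
        (m - μ.real U) * (-Real.log s) + (m - a) * (-Real.log (1 - s)) +
          ∫ x in U, -Real.log (coverWeight A w K x) ∂μ := by
      rw [← integral_indicator hVm]
      refine (integral_mono (iV.integrable_indicator hVm) ((i1.add i2).add i3) hle).trans ?_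
      rw [integral_add' (i1.add i2) i3, integral_add' i1 i2, integral_indicator hUm,
        integral_indicator_const _ ((hA K).diff hUm),
        integral_indicator_const _ (hUm.diff (hA K)), hb, hc, smul_eq_mul, smul_eq_mul]
    have hlog : μ.real U * (Real.log m - Real.log (μ.real U)) ≤
        (∑ n ∈ Finset.range K, μ.real (A n)) * (Real.log m - Real.log (μ.real U)) := by
      rcases hu0.eq_or_lt with h | h
      · have : ∑ n ∈ Finset.range K, μ.real (A n) = 0 := by
          refine Finset.sum_eq_zero fun n hn => le_antisymm ?_ measureReal_nonneg
          rw [h]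
          exact measureReal_mono (Set.subset_biUnion_of_mem (u := A) (Finset.mem_coe.2 hn))
            (measure_ne_top _ _)
        rw [this, ← h]
      · exact mul_le_mul_of_nonneg_right hsum
          (sub_nonneg.2 (Real.log_le_log h (by linarith)))
    rw [Finset.sum_range_succ]
    simp only [Finset.sum_add_distrib, ← Finset.sum_mul] at hint ⊢
    linarith

lemma sum_withDensity_ofReal {α ι : Type*} [MeasurableSpace α] [Fintype ι] (μ : Measure α)
    {f : ι → α → ℝ} (hf : ∀ i, Measurable (f i)) (h0 : ∀ i x, 0 ≤ f i x)
    (h1 : ∀ x, ∑ i, f i x = 1) :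
    ∑ i, μ.withDensity (fun x => ENNReal.ofReal (f i x)) = μ := by
  ext s hs
  rw [Measure.finsetSum_apply]
  simp only [withDensity_apply _ hs]
  rw [← lintegral_finsetSum _ fun i _ => (hf i).ennreal_ofReal]
  simp_rw [← ENNReal.ofReal_sum_of_nonneg fun i _ => h0 i _, h1]
  simp

lemma integrable_mul_log_of_mem_Icc {α : Type*} [MeasurableSpace α] {μ : Measure α}
    [IsFiniteMeasure μ] {f : α → ℝ} (hf : AEStronglyMeasurable f μ) {C : ℝ}
    (h : ∀ᵐ x ∂μ, f x ∈ Set.Icc 0 C) : Integrable (fun x => f x * Real.log (f x)) μ := by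
  obtain ⟨B, hB⟩ := (isCompact_Icc (a := (0 : ℝ)) (b := C)).exists_bound_of_continuousOn
    Real.continuous_mul_log.continuousOn
  refine Integrable.of_bound (C := B) (Real.continuous_mul_log.comp_aestronglyMeasurable hf) ?_
  filter_upwards [h] with x hx using hB _ hx

section Coupling

variable {α β ι : Type*} [MeasurableSpace α] [MeasurableSpace β] [Fintype ι]

/-- Resample the first coordinate of `γ₀` given a random label, where `p i x` is the probability
of the label `i` at `x`. -/
def resample (μ : Measure α) (γ₀ : Measure (α × β)) (p : ι → α → ℝ) : Measure (α × β) :=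
  ∑ i, ENNReal.ofReal (∫ x, p i x ∂μ)⁻¹ •
    (μ.withDensity fun x => ENNReal.ofReal (p i x)).prod
      (γ₀.withDensity fun z => ENNReal.ofReal (p i z.1)).snd

variable {μ : Measure α} {ν : Measure β} [IsProbabilityMeasure μ]
  {γ₀ : Measure (α × β)} {p : ι → α → ℝ}

lemma integrable_of_sum_eq_one (hp : ∀ i, Measurable (p i)) (h0 : ∀ i x, 0 ≤ p i x)
    (h1 : ∀ x, ∑ i, p i x = 1) (i : ι) : Integrable (p i) μ := by
  refine Integrable.of_bound (C := 1) (hp i).aestronglyMeasurable (ae_of_all _ fun x => ?_)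
  rw [Real.norm_of_nonneg (h0 i x), ← h1 x]
  exact Finset.single_le_sum (f := fun i => p i x) (fun i _ => h0 i x) (Finset.mem_univ i)

lemma withDensity_ofReal_univ (hp : ∀ i, Measurable (p i)) (h0 : ∀ i x, 0 ≤ p i x)
    (h1 : ∀ x, ∑ i, p i x = 1) (i : ι) :
    (μ.withDensity fun x => ENNReal.ofReal (p i x)) Set.univ = ENNReal.ofReal (∫ x, p i x ∂μ) := by
  rw [withDensity_apply _ MeasurableSet.univ, Measure.restrict_univ,
    ofReal_integral_eq_lintegral_ofReal (integrable_of_sum_eq_one hp h0 h1 i)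
      (ae_of_all _ (h0 i))]

lemma withDensity_ofReal_fst_univ (hfst : γ₀.fst = μ) (hp : ∀ i, Measurable (p i))
    (h0 : ∀ i x, 0 ≤ p i x) (h1 : ∀ x, ∑ i, p i x = 1) (i : ι) :
    (γ₀.withDensity fun z => ENNReal.ofReal (p i z.1)) Set.univ =
      ENNReal.ofReal (∫ x, p i x ∂μ) := by
  rw [← withDensity_ofReal_univ hp h0 h1, withDensity_apply _ MeasurableSet.univ,
    withDensity_apply _ MeasurableSet.univ, Measure.restrict_univ, Measure.restrict_univ, ← hfst,
    Measure.fst, lintegral_map (hp i).ennreal_ofReal measurable_fst]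

lemma resample_fst (hfst : γ₀.fst = μ) (hp : ∀ i, Measurable (p i))
    (h0 : ∀ i x, 0 ≤ p i x) (h1 : ∀ x, ∑ i, p i x = 1) : (resample μ γ₀ p).fst = μ := by
  have hG := withDensity_ofReal_fst_univ hfst hp h0 h1
  have hM := withDensity_ofReal_univ (μ := μ) hp h0 h1
  conv_rhs => rw [← sum_withDensity_ofReal μ hp h0 h1]
  rw [resample, Measure.fst, ← Measure.mapₗ_apply_of_measurable measurable_fst, map_sum]
  refine Finset.sum_congr rfl fun i _ => ?_
  have : IsFiniteMeasure (γ₀.withDensity fun z => ENNReal.ofReal (p i z.1)) :=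
    ⟨by rw [hG]; exact ENNReal.ofReal_lt_top⟩
  rw [map_smul, Measure.mapₗ_apply_of_measurable measurable_fst, Measure.map_fst_prod,
    Measure.snd_univ, hG, smul_smul]
  have hq : 0 ≤ ∫ x, p i x ∂μ := integral_nonneg (h0 i)
  rcases hq.eq_or_lt with h | h
  · rw [Measure.measure_univ_eq_zero.1 ((hM i).trans (by rw [← h, ENNReal.ofReal_zero])),
      smul_zero]
  · rw [← ENNReal.ofReal_mul (inv_nonneg.2 hq), inv_mul_cancel₀ h.ne', ENNReal.ofReal_one, one_smul]

lemma sum_withDensity_snd (hsnd : γ₀.snd = ν) (hp : ∀ i, Measurable (p i))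
    (h0 : ∀ i x, 0 ≤ p i x) (h1 : ∀ x, ∑ i, p i x = 1) :
    ∑ i, (γ₀.withDensity fun z => ENNReal.ofReal (p i z.1)).snd = ν := by
  rw [← hsnd]
  conv_rhs => rw [← sum_withDensity_ofReal γ₀ (f := fun i z => p i z.1)
    (fun i => (hp i).comp measurable_fst) (fun i z => h0 i z.1) (fun z => h1 z.1)]
  simp only [Measure.snd, ← Measure.mapₗ_apply_of_measurable measurable_snd, map_sum]

lemma resample_snd (hfst : γ₀.fst = μ) (hsnd : γ₀.snd = ν) (hp : ∀ i, Measurable (p i))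
    (h0 : ∀ i x, 0 ≤ p i x) (h1 : ∀ x, ∑ i, p i x = 1) : (resample μ γ₀ p).snd = ν := by
  have hG := withDensity_ofReal_fst_univ hfst hp h0 h1
  have hM := withDensity_ofReal_univ (μ := μ) hp h0 h1
  conv_rhs => rw [← sum_withDensity_snd hsnd hp h0 h1]
  rw [resample, Measure.snd, ← Measure.mapₗ_apply_of_measurable measurable_snd, map_sum]
  refine Finset.sum_congr rfl fun i _ => ?_
  have : IsFiniteMeasure (γ₀.withDensity fun z => ENNReal.ofReal (p i z.1)) :=
    ⟨by rw [hG]; exact ENNReal.ofReal_lt_top⟩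
  have : IsFiniteMeasure (μ.withDensity fun x => ENNReal.ofReal (p i x)) :=
    ⟨by rw [hM]; exact ENNReal.ofReal_lt_top⟩
  rw [map_smul, Measure.mapₗ_apply_of_measurable measurable_snd, Measure.map_snd_prod,
    hM, smul_smul]
  have hq : 0 ≤ ∫ x, p i x ∂μ := integral_nonneg (h0 i)
  rcases hq.eq_or_lt with h | h
  · rw [Measure.measure_univ_eq_zero.1 ((hG i).trans (by rw [← h, ENNReal.ofReal_zero])),
      Measure.snd_zero, smul_zero]
  · rw [← ENNReal.ofReal_mul (inv_nonneg.2 hq), inv_mul_cancel₀ h.ne', ENNReal.ofReal_one, one_smul]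

lemma ent_resample_le [IsProbabilityMeasure ν] (hfst : γ₀.fst = μ) (hsnd : γ₀.snd = ν)
    (hp : ∀ i, Measurable (p i))
    (h0 : ∀ i x, 0 ≤ p i x) (h1 : ∀ x, ∑ i, p i x = 1) :
    Ent (resample μ γ₀ p) (μ.prod ν) ≤
      ((∑ i, ∫ x, p i x * Real.log (p i x / ∫ x, p i x ∂μ) ∂μ : ℝ) : EReal) := by
  set q : ι → ℝ := fun i => ∫ x, p i x ∂μ with hq
  have hq0 : ∀ i, 0 ≤ q i := fun i => integral_nonneg (h0 i)
  have hp1 : ∀ i x, p i x ≤ 1 := fun i x => by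
    rw [← h1 x]
    exact Finset.single_le_sum (f := fun i => p i x) (fun i _ => h0 i x) (Finset.mem_univ i)
  have hG := withDensity_ofReal_fst_univ hfst hp h0 h1
  set N : ι → Measure β := fun i => (γ₀.withDensity fun z => ENNReal.ofReal (p i z.1)).snd with hN
  have hNu : ∀ i, N i Set.univ = ENNReal.ofReal (q i) := fun i => by
    rw [hN, ← hG i, Measure.snd_univ]
  have hNfin : ∀ i, IsFiniteMeasure (N i) := fun i =>
    ⟨by rw [hNu]; exact ENNReal.ofReal_lt_top⟩
  have hNsum : ∑ i, N i = ν := sum_withDensity_snd hsnd hp h0 h1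
  have hNac : ∀ i, N i ≪ ν := fun i => by
    refine Measure.absolutelyContinuous_of_le ?_
    rw [← hNsum]
    exact Finset.single_le_sum (f := N) (fun _ _ => Measure.zero_le _) (Finset.mem_univ i)
  set g : ι → β → ℝ≥0∞ := fun i => (N i).rnDeriv ν with hg
  have hgm : ∀ i, Measurable (g i) := fun i => Measure.measurable_rnDeriv _ _
  have hNg : ∀ i, ν.withDensity (g i) = N i := fun i =>
    Measure.withDensity_rnDeriv_eq _ _ (hNac i)
  have hgl : ∀ i, ∫⁻ y, g i y ∂ν = ENNReal.ofReal (q i) := fun i => by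
    rw [← hNu, ← hNg, withDensity_apply _ MeasurableSet.univ, Measure.restrict_univ]
  have hgtop : ∀ i, ∀ᵐ y ∂ν, g i y < ∞ := fun i => Measure.rnDeriv_lt_top _ _
  have hgsum : ∀ᵐ y ∂ν, ∑ i, g i y = 1 := by
    have hm : Measurable fun y => ∑ i, g i y := Finset.measurable_fun_sum _ fun i _ => hgm i
    refine (withDensity_eq_iff hm.aemeasurable aemeasurable_one ?_).1 ?_
    · rw [lintegral_finsetSum _ fun i _ => hgm i]
      simp only [hgl]
      exact (ENNReal.sum_lt_top.2 fun i _ => ENNReal.ofReal_lt_top).ne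
    · rw [← Pi.one_def, withDensity_one]
      conv_rhs => rw [← hNsum]
      ext s hs
      rw [withDensity_apply _ hs, lintegral_finsetSum _ fun i _ => hgm i,
        Measure.finsetSum_apply]
      exact Finset.sum_congr rfl fun i _ => by rw [← hNg, withDensity_apply _ hs]
  set h : ι → β → ℝ := fun i y => (g i y).toReal with hh
  have hhm : ∀ i, Measurable (h i) := fun i => (hgm i).ennreal_toReal
  have hh0 : ∀ i y, 0 ≤ h i y := fun i y => ENNReal.toReal_nonneg
  have hhsum : ∀ᵐ y ∂ν, ∑ i, h i y = 1 := by
    filter_upwards [hgsum, ae_all_iff.2 hgtop] with y hy hy'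
    rw [hh, ← ENNReal.toReal_sum fun i _ => (hy' i).ne, hy, ENNReal.toReal_one]
  have hhi : ∀ i, Integrable (h i) ν := fun i => integrable_toReal_of_lintegral_ne_top
    (hgm i).aemeasurable (by rw [hgl]; exact ENNReal.ofReal_ne_top)
  have hhint : ∀ i, ∫ y, h i y ∂ν = q i := fun i => by
    rw [hh, integral_toReal (hgm i).aemeasurable (hgtop i), hgl, ENNReal.toReal_ofReal (hq0 i)]
  set ρ : α × β → ℝ≥0∞ := fun z =>
    ∑ i, ENNReal.ofReal (q i)⁻¹ * (ENNReal.ofReal (p i z.1) * g i z.2) with hρ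
  have hρi : ∀ i, Measurable fun z : α × β => ENNReal.ofReal (p i z.1) * g i z.2 := fun i =>
    ((hp i).comp measurable_fst).ennreal_ofReal.mul ((hgm i).comp measurable_snd)
  have hρm : Measurable ρ := Finset.measurable_fun_sum _ fun i _ => (hρi i).const_mul _
  have hγ : resample μ γ₀ p = (μ.prod ν).withDensity ρ := by
    have e : ∀ i, (μ.withDensity fun x => ENNReal.ofReal (p i x)).prod (N i) =
        (μ.prod ν).withDensity fun z => ENNReal.ofReal (p i z.1) * g i z.2 := fun i => by
      rw [← hNg, prod_withDensity (hp i).ennreal_ofReal (hgm i)]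
    ext s hs
    rw [resample, Measure.finsetSum_apply, withDensity_apply _ hs,
      lintegral_finsetSum _ fun i _ => (hρi i).const_mul _]
    refine Finset.sum_congr rfl fun i _ => ?_
    rw [Measure.smul_apply, smul_eq_mul, e, withDensity_apply _ hs,
      lintegral_const_mul _ (hρi i)]
  have hrn : (resample μ γ₀ p).rnDeriv (μ.prod ν) =ᵐ[μ.prod ν] ρ := by
    rw [hγ]
    exact Measure.rnDeriv_withDensity _ hρm
  have hsumP : ∀ᵐ z ∂μ.prod ν, ∑ i, h i z.2 = 1 :=
    Measure.quasiMeasurePreserving_snd.ae hhsum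
  have htopP : ∀ᵐ z ∂μ.prod ν, ∀ i, g i z.2 < ∞ :=
    Measure.quasiMeasurePreserving_snd.ae (ae_all_iff.2 hgtop)
  set r : α × β → ℝ := fun z => ∑ i, h i z.2 * (p i z.1 / q i) with hr
  have hrm : Measurable r := Finset.measurable_fun_sum _ fun i _ =>
    ((hhm i).comp measurable_snd).mul (((hp i).comp measurable_fst).div_const _)
  have hrnr : ∀ᵐ z ∂μ.prod ν, ((resample μ γ₀ p).rnDeriv (μ.prod ν) z).toReal = r z := by
    filter_upwards [hrn, htopP] with z hz hz'
    rw [hz, hρ, hr, ENNReal.toReal_sum fun i _ => ENNReal.mul_ne_top ENNReal.ofReal_ne_top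
      (ENNReal.mul_ne_top ENNReal.ofReal_ne_top (hz' i).ne)]
    refine Finset.sum_congr rfl fun i _ => ?_
    rw [ENNReal.toReal_mul, ENNReal.toReal_mul, ENNReal.toReal_ofReal (inv_nonneg.2 (hq0 i)),
      ENNReal.toReal_ofReal (h0 i _)]
    simp only [hh]
    ring
  have hrI : Integrable (fun z => r z * Real.log (r z)) (μ.prod ν) := by
    refine integrable_mul_log_of_mem_Icc (C := ∑ i, (q i)⁻¹) hrm.aestronglyMeasurable ?_
    filter_upwards [hsumP] with z hz
    refine ⟨Finset.sum_nonneg fun i _ => mul_nonneg (hh0 _ _) (div_nonneg (h0 _ _) (hq0 i)),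
      Finset.sum_le_sum fun i _ => ?_⟩
    have h2 : h i z.2 ≤ 1 := by
      rw [← hz]
      exact Finset.single_le_sum (f := fun i => h i z.2) (fun i _ => hh0 i _) (Finset.mem_univ i)
    have h3 : p i z.1 / q i ≤ (q i)⁻¹ := by
      rw [div_eq_mul_inv]
      exact mul_le_of_le_one_left (inv_nonneg.2 (hq0 i)) (hp1 _ _)
    exact (mul_le_of_le_one_left (div_nonneg (h0 _ _) (hq0 i)) h2).trans h3
  have hI : Integrable (fun z => ((resample μ γ₀ p).rnDeriv (μ.prod ν) z).toReal *
      Real.log ((resample μ γ₀ p).rnDeriv (μ.prod ν) z).toReal) (μ.prod ν) := by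
    refine hrI.congr ?_
    filter_upwards [hrnr] with z hz
    rw [hz]
  have hac : resample μ γ₀ p ≪ μ.prod ν := hγ ▸ withDensity_absolutelyContinuous _ _
  rw [Ent, if_pos ⟨hac, hI⟩, EReal.coe_le_coe_iff]
  have hφI : ∀ i, Integrable (fun x => p i x / q i * Real.log (p i x / q i)) μ := fun i => by
    refine integrable_mul_log_of_mem_Icc (C := (q i)⁻¹)
      ((hp i).div_const _).aestronglyMeasurable (ae_of_all _ fun x =>
        ⟨div_nonneg (h0 _ _) (hq0 i), ?_⟩)
    rw [div_eq_mul_inv]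
    exact mul_le_of_le_one_left (inv_nonneg.2 (hq0 i)) (hp1 _ _)
  have hTI : ∀ i, Integrable
      (fun z : α × β => (p i z.1 / q i * Real.log (p i z.1 / q i)) * h i z.2) (μ.prod ν) :=
    fun i => (hφI i).mul_prod (hhi i)
  calc _ = ∫ z, r z * Real.log (r z) ∂μ.prod ν := by
        refine integral_congr_ae ?_
        filter_upwards [hrnr] with z hz
        rw [hz]
    _ ≤ ∫ z, ∑ i, (p i z.1 / q i * Real.log (p i z.1 / q i)) * h i z.2 ∂μ.prod ν := by
        refine integral_mono_ae hrI (integrable_finsetSum _ fun i _ => hTI i) ?_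
        filter_upwards [hsumP] with z hz
        have := Real.convexOn_mul_log.map_sum_le (t := Finset.univ) (w := fun i => h i z.2)
          (p := fun i => p i z.1 / q i) (fun i _ => hh0 i _) hz
          (fun i _ => div_nonneg (h0 _ _) (hq0 i))
        simp only [smul_eq_mul] at this
        refine this.trans_eq (Finset.sum_congr rfl fun i _ => mul_comm _ _)
    _ = ∑ i, ∫ x, p i x * Real.log (p i x / q i) ∂μ := by
        rw [integral_finsetSum _ fun i _ => hTI i]
        refine Finset.sum_congr rfl fun i _ => ?_
        rw [integral_prod_mul (fun x => p i x / q i * Real.log (p i x / q i)) (h i), hhint,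
          mul_comm, ← integral_const_mul]
        rcases (hq0 i).eq_or_lt with hz | hz
        · simp [← hz]
        · refine integral_congr_ae (ae_of_all _ fun x => ?_)
          field_simp

lemma integral_resample_le (hfst : γ₀.fst = μ) (hp : ∀ i, Measurable (p i))
    (h0 : ∀ i x, 0 ≤ p i x) (h1 : ∀ x, ∑ i, p i x = 1) [IsProbabilityMeasure γ₀]
    {c : α × β → ℝ} (hc : Measurable c) {C : ℝ} (hcC : ∀ z, |c z| ≤ C)
    {X : Set α} (hX : ∀ᵐ x ∂μ, x ∈ X) {e : ι → ℝ}
    (he : ∀ i, ∀ x ∈ X, ∀ x' ∈ X, p i x ≠ 0 → p i x' ≠ 0 → ∀ y, c (x, y) ≤ c (x', y) + e i) :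
    ∫ z, c z ∂resample μ γ₀ p ≤ ∫ z, c z ∂γ₀ + ∑ i, (∫ x, p i x ∂μ) * e i := by
  have hG := withDensity_ofReal_fst_univ hfst hp h0 h1
  have hM := withDensity_ofReal_univ (μ := μ) hp h0 h1
  set M : ι → Measure α := fun i => μ.withDensity fun x => ENNReal.ofReal (p i x) with hMd
  set G : ι → Measure (α × β) := fun i => γ₀.withDensity fun z => ENNReal.ofReal (p i z.1) with hGd
  have hGfin : ∀ i, IsFiniteMeasure (G i) := fun i =>
    ⟨by rw [hG]; exact ENNReal.ofReal_lt_top⟩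
  have hMfin : ∀ i, IsFiniteMeasure (M i) := fun i =>
    ⟨by rw [hM]; exact ENNReal.ofReal_lt_top⟩
  have hq0 : ∀ i, 0 ≤ ∫ x, p i x ∂μ := fun i => integral_nonneg (h0 i)
  have hcI : ∀ (κ : Measure (α × β)) [IsFiniteMeasure κ], Integrable c κ := fun κ _ =>
    Integrable.of_bound hc.aestronglyMeasurable C (ae_of_all _ hcC)
  have hMX : ∀ i, ∀ᵐ x ∂M i, x ∈ X ∧ p i x ≠ 0 := fun i => by
    refine (ae_withDensity_iff (hp i).ennreal_ofReal).2 ?_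
    filter_upwards [hX] with x hx hx'
    exact ⟨hx, fun h => hx' (by rw [h, ENNReal.ofReal_zero])⟩
  have hGX : ∀ i, ∀ᵐ z ∂G i, z.1 ∈ X ∧ p i z.1 ≠ 0 := fun i => by
    refine (ae_withDensity_iff ((hp i).comp measurable_fst).ennreal_ofReal).2 ?_
    have : ∀ᵐ z ∂γ₀, z.1 ∈ X := ae_of_ae_map measurable_fst.aemeasurable
      (by rw [← Measure.fst, hfst]; exact hX)
    filter_upwards [this] with z hz hz'
    exact ⟨hz, fun h => hz' (by rw [Function.comp_apply, h, ENNReal.ofReal_zero])⟩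
  have hsumG : ∑ i, ∫ z, c z ∂G i = ∫ z, c z ∂γ₀ := by
    rw [← integral_finsetSum_measure fun i _ => hcI (G i)]
    rw [hGd, sum_withDensity_ofReal γ₀ (f := fun i z => p i z.1)
      (fun i => (hp i).comp measurable_fst) (fun i z => h0 i z.1) (fun z => h1 z.1)]
  have hfinp : ∀ i, IsFiniteMeasure
      (ENNReal.ofReal (∫ x, p i x ∂μ)⁻¹ • (M i).prod (G i).snd) := fun i =>
    Measure.smul_finite _ ENNReal.ofReal_ne_top
  rw [resample, integral_finsetSum_measure fun i _ => hcI _, ← hsumG, ← Finset.sum_add_distrib]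
  refine Finset.sum_le_sum fun i _ => ?_
  rw [integral_smul_measure, ENNReal.toReal_ofReal (inv_nonneg.2 (hq0 i)), smul_eq_mul]
  rcases (hq0 i).eq_or_lt with hz | hz
  · have : G i = 0 :=
      Measure.measure_univ_eq_zero.1 ((hG i).trans (by rw [← hz, ENNReal.ofReal_zero]))
    rw [this, ← hz]
    simp
  have hle : ∫ z, c z ∂(M i).prod (G i).snd ≤
      (∫ x, p i x ∂μ) * (∫ z, c z ∂G i + (∫ x, p i x ∂μ) * e i) := by
    have e1 : (M i).prod (G i).snd = ((M i).prod (G i)).map (Prod.map id Prod.snd) := by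
      rw [← Measure.map_prod_map _ _ measurable_id measurable_snd, Measure.map_id, Measure.snd]
    have hm : Measurable (Prod.map id Prod.snd : α × (α × β) → α × β) :=
      measurable_id.prodMap measurable_snd
    rw [e1, integral_map hm.aemeasurable hc.aestronglyMeasurable]
    have i1 : Integrable (fun z => c (Prod.map id Prod.snd z)) ((M i).prod (G i)) :=
      Integrable.of_bound (hc.comp hm).aestronglyMeasurable C (ae_of_all _ fun z => hcC _)
    have i2 : Integrable (fun z : α × (α × β) => c z.2 + e i) ((M i).prod (G i)) :=
      (Integrable.of_bound (hc.comp measurable_snd).aestronglyMeasurable C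
        (ae_of_all _ fun z => hcC _)).add (integrable_const _)
    refine (integral_mono_ae i1 i2 ?_).trans_eq ?_
    · filter_upwards [Measure.quasiMeasurePreserving_fst.ae (hMX i),
        Measure.quasiMeasurePreserving_snd.ae (hGX i)] with z h2 h3
      exact he i z.1 h2.1 z.2.1 h3.1 h2.2 h3.2 z.2.2
    · rw [integral_fun_snd (fun z => c z + e i), integral_add (hcI _) (integrable_const _),
        integral_const, measureReal_def, measureReal_def, hM, hG, ENNReal.toReal_ofReal (hq0 i),
        smul_eq_mul, smul_eq_mul]
  refine (mul_le_mul_of_nonneg_left hle (inv_nonneg.2 (hq0 i))).trans_eq ?_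
  rw [inv_mul_cancel_left₀ hz.ne']

end Coupling

/-- The probability of the label `i` at `x` when labels are drawn proportionally to `w` among the
sets `A i` that contain `x`. -/
def coverLabel {α : Type*} (A : ℕ → Set α) (w : ℕ → ℝ) (K : ℕ) (i : Fin K) (x : α) : ℝ :=
  (A i).indicator (fun _ => w i) x / coverWeight A w K x

section CoverLabel

variable {α : Type*} {A : ℕ → Set α} {w : ℕ → ℝ} {K : ℕ}

lemma coverLabel_nonneg (hw : ∀ n, 0 ≤ w n) (i : Fin K) (x : α) : 0 ≤ coverLabel A w K i x :=
  div_nonneg (Set.indicator_nonneg (fun _ _ => hw i) x) (coverWeight_nonneg A hw K x)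

lemma sum_coverLabel {x : α} (h : 0 < coverWeight A w K x) : ∑ i, coverLabel A w K i x = 1 := by
  simp only [coverLabel]
  rw [← Finset.sum_div, Fin.sum_univ_eq_sum_range (fun n => (A n).indicator (fun _ => w n) x)]
  exact div_self h.ne'

lemma mem_of_coverLabel_ne_zero {i : Fin K} {x : α} (h : coverLabel A w K i x ≠ 0) : x ∈ A i := by
  by_contra hx
  exact h (by rw [coverLabel, Set.indicator_of_notMem hx, zero_div])

lemma measurable_coverLabel [MeasurableSpace α] (hA : ∀ n, MeasurableSet (A n)) (i : Fin K) :
    Measurable (coverLabel A w K i) :=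
  (measurable_const.indicator (hA i)).div (measurable_coverWeight hA w K)

lemma sum_integral_coverLabel_log_le [MeasurableSpace α] {μ : Measure α} [IsProbabilityMeasure μ]
    (hA : ∀ n, MeasurableSet (A n)) (hw : ∀ n, 0 ≤ w n)
    (hw1 : ∑ n ∈ Finset.range K, w n ≤ 1) {κ : ℝ} (hκ : 0 < κ)
    (hκW : ∀ x, κ ≤ coverWeight A w K x) :
    ∑ i, ∫ x, coverLabel A w K i x *
        Real.log (coverLabel A w K i x / ∫ x, coverLabel A w K i x ∂μ) ∂μ ≤
      ∫ x, -Real.log (coverWeight A w K x) ∂μ := by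
  have hp := measurable_coverLabel (w := w) (K := K) hA
  have h0 := coverLabel_nonneg (A := A) (K := K) hw
  have h1 : ∀ x, ∑ i, coverLabel A w K i x = 1 := fun x => sum_coverLabel (hκ.trans_le (hκW x))
  have hpI := fun i => integrable_of_sum_eq_one (μ := μ) hp h0 h1 i
  have hW1 := coverWeight_le_one A hw hw1
  have hWI : Integrable (fun x => -Real.log (coverWeight A w K x)) μ := by
    rw [← integrableOn_univ]
    exact integrableOn_neg_log (measurable_coverWeight hA w K) MeasurableSet.univ hκ
      (fun x _ => hκW x) hW1
  have hW0 : ∀ x, 0 ≤ -Real.log (coverWeight A w K x) := fun x =>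
    neg_nonneg.2 (Real.log_nonpos (hκ.le.trans (hκW x)) (hW1 x))
  have hp1 : ∀ i x, coverLabel A w K i x ≤ 1 := fun i x => by
    rw [← h1 x]
    exact Finset.single_le_sum (f := fun i => coverLabel A w K i x) (fun i _ => h0 i x)
      (Finset.mem_univ i)
  have hpWI : ∀ i, Integrable
      (fun x => coverLabel A w K i x * -Real.log (coverWeight A w K x)) μ := fun i =>
    hWI.mono ((hp i).mul (measurable_coverWeight hA w K).log.neg).aestronglyMeasurable
      (ae_of_all _ fun x => by
        rw [norm_mul, Real.norm_of_nonneg (h0 i x)]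
        exact mul_le_of_le_one_left (norm_nonneg _) (hp1 i x))
  have key : ∀ i : Fin K, ∫ x, coverLabel A w K i x *
        Real.log (coverLabel A w K i x / ∫ x, coverLabel A w K i x ∂μ) ∂μ ≤
      ∫ x, coverLabel A w K i x * -Real.log (coverWeight A w K x) ∂μ +
        (w i - ∫ x, coverLabel A w K i x ∂μ) := by
    intro i
    set q := ∫ x, coverLabel A w K i x ∂μ with hq
    have hq0 : 0 ≤ q := integral_nonneg (h0 i)
    have hr : 0 ≤ ∫ x, coverLabel A w K i x * -Real.log (coverWeight A w K x) ∂μ :=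
      integral_nonneg fun x => mul_nonneg (h0 i x) (hW0 x)
    rcases hq0.eq_or_lt with h | h
    · rw [← h]
      simp only [div_zero, Real.log_zero, mul_zero, integral_zero, sub_zero]
      linarith [hw i]
    have hwi : 0 < w i := (hw i).lt_of_ne' fun hwz => h.ne' (by simp [hq, coverLabel, hwz])
    have e : ∀ x, coverLabel A w K i x * Real.log (coverLabel A w K i x / q) =
        coverLabel A w K i x * -Real.log (coverWeight A w K x) +
          coverLabel A w K i x * Real.log (w i / q) := by
      intro x
      have hWx : 0 < coverWeight A w K x := hκ.trans_le (hκW x)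
      by_cases hx : x ∈ A i
      · rw [coverLabel, Set.indicator_of_mem hx, Real.log_div (by positivity) h.ne',
          Real.log_div hwi.ne' hWx.ne', Real.log_div hwi.ne' h.ne']
        ring
      · simp [coverLabel, hx]
    simp_rw [e]
    rw [integral_add (hpWI i) ((hpI i).mul_const _), integral_mul_const, ← hq]
    have h2 := mul_le_mul_of_nonneg_left (Real.log_le_sub_one_of_pos (div_pos hwi h)) hq0
    rw [mul_sub, mul_one, mul_div_cancel₀ _ h.ne'] at h2
    linarith
  refine (Finset.sum_le_sum fun i _ => key i).trans ?_
  rw [Finset.sum_add_distrib, Finset.sum_sub_distrib, ← integral_finsetSum _ fun i _ => hpI i,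
    ← integral_finsetSum _ fun i _ => hpWI i, Fin.sum_univ_eq_sum_range]
  simp only [← Finset.sum_mul, h1, one_mul, integral_const, probReal_univ, smul_eq_mul]
  linarith

end CoverLabel

section Metric

variable {α β : Type*} [PseudoMetricSpace α] [MeasurableSpace α] [MeasurableSpace β]
  {μ : Measure α} {ν : Measure β} [IsProbabilityMeasure μ] [IsProbabilityMeasure ν]
  {γ₀ : Measure (α × β)} [IsProbabilityMeasure γ₀] {c : α × β → ℝ} {C L : ℝ}

lemma entCost_le_of_cover (hfst : γ₀.fst = μ) (hsnd : γ₀.snd = ν) (hc : Measurable c)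
    (hcC : ∀ z, |c z| ≤ C) (hL : 0 ≤ L) (hcL : ∀ x x' y, c (x, y) ≤ c (x', y) + L * dist x x')
    {X : Set α} (hX : ∀ᵐ x ∂μ, x ∈ X) {D : ℝ} (hD : ∀ x ∈ X, ∀ x' ∈ X, dist x x' ≤ D) (hD0 : 0 ≤ D)
    {ε : ℝ} (hε : 0 < ε) {A : ℕ → Set α} (hA : ∀ n, MeasurableSet (A n)) (K : ℕ)
    (hAd : ∀ n < K, ∀ x ∈ A n, ∀ x' ∈ A n, dist x x' ≤ ε)
    (hAu : ⋃ n ∈ Finset.range (K + 1), A n = Set.univ) {η : ℝ} (hη : 0 < η) :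
    entCost μ ν c ε ≤ ((∫ z, c z ∂γ₀ + ε * (∑ n ∈ Finset.range (K + 1),
      Real.negMulLog (μ.real (A n)) + η) + L * ε + L * D * μ.real (A K) : ℝ) : EReal) := by
  obtain ⟨w, hw, hw1, κ, hκ, hκW, hint⟩ := exists_coverWeight μ hA (K + 1) η hη
  rw [hAu] at hκW hint
  have hκW' : ∀ x, κ ≤ coverWeight A w (K + 1) x := fun x => hκW x (Set.mem_univ x)
  have hp := measurable_coverLabel (w := w) (K := K + 1) hA
  have h0 := coverLabel_nonneg (A := A) (K := K + 1) hw
  have h1 : ∀ x, ∑ i, coverLabel A w (K + 1) i x = 1 := fun x =>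
    sum_coverLabel (hκ.trans_le (hκW' x))
  have hpI := fun i => integrable_of_sum_eq_one (μ := μ) hp h0 h1 i
  set q : Fin (K + 1) → ℝ := fun i => ∫ x, coverLabel A w (K + 1) i x ∂μ with hq
  have hq0 : ∀ i, 0 ≤ q i := fun i => integral_nonneg (h0 i)
  have hqs : ∑ i, q i = 1 := by
    rw [hq, ← integral_finsetSum _ fun i _ => hpI i]
    simp [h1]
  have hqK : q (Fin.last K) ≤ μ.real (A K) := by
    rw [← integral_indicator_one (hA K)]
    refine integral_mono (hpI _) ((integrable_const 1).indicator (hA K)) fun x => ?_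
    by_cases hx : x ∈ A K
    · rw [Set.indicator_of_mem hx, Pi.one_apply, ← h1 x]
      exact Finset.single_le_sum (f := fun i => coverLabel A w (K + 1) i x) (fun i _ => h0 i x)
        (Finset.mem_univ _)
    · simp [coverLabel, hx]
  set γ := resample μ γ₀ (coverLabel A w (K + 1)) with hγ
  have hγ1 : γ.fst = μ := resample_fst hfst hp h0 h1
  have hγ2 : γ.snd = ν := resample_snd hfst hsnd hp h0 h1
  have hγP : IsProbabilityMeasure γ := ⟨by rw [← Measure.fst_univ, hγ1, measure_univ]⟩
  have hent : Ent γ (μ.prod ν) ≤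
      ((∑ n ∈ Finset.range (K + 1), Real.negMulLog (μ.real (A n)) + η : ℝ) : EReal) := by
    refine (ent_resample_le hfst hsnd hp h0 h1).trans (EReal.coe_le_coe_iff.2 ?_)
    refine (sum_integral_coverLabel_log_le hA hw hw1 hκ hκW').trans ?_
    simpa using hint
  have hcost : ∫ z, c z ∂γ ≤ ∫ z, c z ∂γ₀ + (L * ε + L * D * μ.real (A K)) := by
    refine (integral_resample_le hfst hp h0 h1 hc hcC hX
      (e := fun i => L * if (i : ℕ) < K then ε else D) ?_).trans (add_le_add le_rfl ?_)
    · intro i x hx x' hx' hi hi' y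
      refine (hcL x x' y).trans (add_le_add le_rfl (mul_le_mul_of_nonneg_left ?_ hL))
      split_ifs with h
      · exact hAd i h x (mem_of_coverLabel_ne_zero hi) x' (mem_of_coverLabel_ne_zero hi')
      · exact hD x hx x' hx'
    · rw [Fin.sum_univ_castSucc]
      rw [Fin.sum_univ_castSucc] at hqs
      simp only [Fin.val_castSucc, Fin.is_lt, if_true, Fin.val_last, lt_irrefl, if_false,
        ← Finset.sum_mul]
      have h2 := mul_le_mul_of_nonneg_right hqK (mul_nonneg hL hD0)
      have h3 : ∑ i : Fin K, q i.castSucc ≤ 1 := by linarith [hq0 (Fin.last K)]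
      have h4 := mul_le_mul_of_nonneg_right h3 (mul_nonneg hL hε.le)
      simp only [hq] at h2 h4
      linarith
  have hmem : entCost μ ν c ε ≤ ((∫ z, c z ∂γ : ℝ) : EReal) + (ε : EReal) * Ent γ (μ.prod ν) :=
    sInf_le ⟨γ, hγP, hγ1, hγ2, rfl⟩
  refine hmem.trans ?_
  have h5 : (ε : EReal) * Ent γ (μ.prod ν) ≤
      ((ε * (∑ n ∈ Finset.range (K + 1), Real.negMulLog (μ.real (A n)) + η) : ℝ) : EReal) := by
    rw [EReal.coe_mul]
    exact mul_le_mul_of_nonneg_left hent (EReal.coe_nonneg.2 hε.le)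
  refine (add_le_add (EReal.coe_le_coe_iff.2 hcost) h5).trans ?_
  rw [← EReal.coe_add, EReal.coe_le_coe_iff]
  linarith

lemma entCost_le_add_entH (hfst : γ₀.fst = μ) (hsnd : γ₀.snd = ν) (hc : Measurable c)
    (hcC : ∀ z, |c z| ≤ C) (hL : 0 ≤ L) (hcL : ∀ x x' y, c (x, y) ≤ c (x', y) + L * dist x x')
    {X : Set α} (hX : ∀ᵐ x ∂μ, x ∈ X) (hXb : Bornology.IsBounded X) {ε : ℝ} (hε : 0 < ε) :
    entCost μ ν c ε ≤ ((∫ z, c z ∂γ₀ : ℝ) : EReal) + (ε : EReal) * (entH ε μ : EReal) +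
      ((L * ε : ℝ) : EReal) := by
  rcases eq_or_ne (entH ε μ) ∞ with htop | htop
  · rw [htop, EReal.coe_ennreal_top, EReal.coe_mul_top_of_pos hε, EReal.coe_add_top,
      EReal.top_add_coe]
    exact le_top
  set h := (entH ε μ).toReal with hh
  have e : ((∫ z, c z ∂γ₀ : ℝ) : EReal) + (ε : EReal) * (entH ε μ : EReal) +
      ((L * ε : ℝ) : EReal) = ((∫ z, c z ∂γ₀ + ε * h + L * ε : ℝ) : EReal) := by
    rw [← ENNReal.ofReal_toReal htop, EReal.coe_ennreal_ofReal, max_eq_left ENNReal.toReal_nonneg]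
    push_cast
    rfl
  rw [e]
  refine EReal.le_of_forall_lt_iff_le.1 fun z hz => ?_
  rw [EReal.coe_lt_coe_iff] at hz
  set η := z - (∫ z, c z ∂γ₀ + ε * h + L * ε) with hη
  have hη0 : 0 < η := sub_pos.2 hz
  have hη1 : 0 < η / (4 * ε) := by positivity
  obtain ⟨A, ⟨hAm, hAd, hAu⟩, hAs⟩ : ∃ A : ℕ → Set α, ((∀ n, MeasurableSet (A n)) ∧
      (∀ n, Metric.ediam (A n) ≤ ENNReal.ofReal ε) ∧ (⋃ n, A n) = Set.univ) ∧
      ∑' n, ENNReal.ofReal (Real.negMulLog ((μ (A n)).toReal)) <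
        entH ε μ + ENNReal.ofReal (η / (4 * ε)) := by
    have hlt : entH ε μ < entH ε μ + ENNReal.ofReal (η / (4 * ε)) :=
      ENNReal.lt_add_right htop (by simpa using hη1)
    conv_lhs at hlt => rw [entH]
    simp only [iInf_lt_iff] at hlt
    obtain ⟨A, h1, h2⟩ := hlt
    exact ⟨A, h1, h2⟩
  have hnn : ∀ n, 0 ≤ Real.negMulLog (μ.real (A n)) := fun n =>
    Real.negMulLog_nonneg measureReal_nonneg measureReal_le_one
  have hsum : ∀ K, ∑ n ∈ Finset.range K, Real.negMulLog (μ.real (A n)) ≤ h + η / (4 * ε) := by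
    intro K
    have h1 := (ENNReal.sum_le_tsum (f := fun n => ENNReal.ofReal (Real.negMulLog (μ.real (A n))))
      (Finset.range K)).trans hAs.le
    rw [← ENNReal.ofReal_sum_of_nonneg fun n _ => hnn n, ← ENNReal.ofReal_toReal htop,
      ← ENNReal.ofReal_add ENNReal.toReal_nonneg hη1.le] at h1
    exact (ENNReal.ofReal_le_ofReal_iff (add_nonneg ENNReal.toReal_nonneg hη1.le)).1 h1
  set R : ℕ → Set α := fun K => (⋃ n ∈ Finset.range K, A n)ᶜ with hR
  have hRm : ∀ K, MeasurableSet (R K) := fun K =>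
    (Finset.measurableSet_biUnion _ fun n _ => hAm n).compl
  have hRlim : Tendsto (fun K => μ.real (R K)) atTop (𝓝 0) := by
    have hanti : Antitone R := fun i j hij => Set.compl_subset_compl.2
      (Set.biUnion_subset_biUnion_left fun n hn =>
        Finset.mem_range.2 ((Finset.mem_range.1 hn).trans_le hij))
    have hemp : ⋂ K, R K = ∅ := by
      rw [Set.eq_empty_iff_forall_notMem]
      intro x hx
      obtain ⟨n, hn⟩ := Set.mem_iUnion.1 (hAu ▸ Set.mem_univ x)
      exact Set.mem_iInter.1 hx (n + 1)
        (Set.mem_biUnion (Finset.mem_coe.2 (Finset.self_mem_range_succ n)) hn)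
    have := tendsto_measure_iInter_atTop (μ := μ) (fun K => (hRm K).nullMeasurableSet) hanti
      ⟨0, measure_ne_top _ _⟩
    rw [hemp, measure_empty] at this
    have h2 := (ENNReal.tendsto_toReal ENNReal.zero_ne_top).comp this
    rw [ENNReal.toReal_zero] at h2
    exact h2
  set D := Metric.diam X with hDd
  have hlim : Tendsto (fun K => ε * Real.negMulLog (μ.real (R K)) + L * D * μ.real (R K)) atTop
      (𝓝 0) := by
    have := ((Real.continuous_negMulLog.tendsto 0).comp hRlim).const_mul ε |>.add
      (hRlim.const_mul (L * D))
    simpa using this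
  obtain ⟨K, hK⟩ := (hlim.eventually_lt_const (half_pos hη0)).exists
  set A' := Function.update A K (R K) with hA'
  have hA'K : A' K = R K := Function.update_self ..
  have hA'n : ∀ n < K, A' n = A n := fun n hn => Function.update_of_ne hn.ne ..
  have hA'm : ∀ n, MeasurableSet (A' n) := fun n => by
    rcases eq_or_ne n K with rfl | hn
    · rw [hA'K]; exact hRm n
    · rw [hA', Function.update_of_ne hn]; exact hAm n
  have hA'u : ⋃ n ∈ Finset.range (K + 1), A' n = Set.univ := by
    rw [Finset.range_add_one, Finset.set_biUnion_insert, hA'K,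
      Set.iUnion₂_congr fun n hn => hA'n n (Finset.mem_range.1 hn), hR]
    exact Set.compl_union_self _
  have hA'd : ∀ n < K, ∀ x ∈ A' n, ∀ x' ∈ A' n, dist x x' ≤ ε := by
    intro n hn x hx x' hx'
    rw [hA'n n hn] at hx hx'
    exact (edist_le_ofReal hε.le).1 ((Metric.edist_le_ediam_of_mem hx hx').trans (hAd n))
  refine (entCost_le_of_cover hfst hsnd hc hcC hL hcL hX
    (fun x hx x' hx' => Metric.dist_le_diam_of_mem hXb hx hx') Metric.diam_nonneg hε hA'm K hA'd
    hA'u hη1).trans (EReal.coe_le_coe_iff.2 ?_)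
  rw [Finset.sum_range_succ, hA'K,
    Finset.sum_congr rfl fun n hn => by rw [hA'n n (Finset.mem_range.1 hn)]]
  have h6 := mul_le_mul_of_nonneg_left (hsum K) hε.le
  have h7 : ε * (η / (4 * ε)) = η / 4 := by field_simp
  rw [mul_add, h7] at h6
  rw [mul_add, mul_add, h7]
  linarith

end Metric

lemma ent_map_swap {α β : Type*} [MeasurableSpace α] [MeasurableSpace β] (γ q : Measure (α × β))
    [SigmaFinite γ] [SigmaFinite q] :
    Ent (γ.map Prod.swap) (q.map Prod.swap) = Ent γ q := by
  have hs : MeasurableEmbedding (Prod.swap : α × β → β × α) :=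
    MeasurableEquiv.prodComm.measurableEmbedding
  have hr := hs.rnDeriv_map γ q
  have hac : γ.map Prod.swap ≪ q.map Prod.swap ↔ γ ≪ q := by
    refine ⟨fun h => ?_, fun h => h.map measurable_swap⟩
    simpa [Measure.map_map measurable_swap measurable_swap] using
      h.map (measurable_swap (α := β) (β := α))
  have hcomp : (fun x => ((γ.map Prod.swap).rnDeriv (q.map Prod.swap) (Prod.swap x)).toReal *
      Real.log ((γ.map Prod.swap).rnDeriv (q.map Prod.swap) (Prod.swap x)).toReal) =ᵐ[q]
      fun x => (γ.rnDeriv q x).toReal * Real.log (γ.rnDeriv q x).toReal := by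
    filter_upwards [hr] with x hx
    rw [hx]
  rw [Ent, Ent]
  simp only [hac, hs.integrable_map_iff, hs.integral_map, Function.comp_def, integral_congr_ae hcomp,
    integrable_congr hcomp]

lemma integral_map_swap {α β : Type*} [MeasurableSpace α] [MeasurableSpace β]
    (γ : Measure (α × β)) (c : β × α → ℝ) :
    ∫ z, c z ∂γ.map Prod.swap = ∫ z, c z.swap ∂γ :=
  (show MeasurableEmbedding (Prod.swap : α × β → β × α) from
    MeasurableEquiv.prodComm.measurableEmbedding).integral_map c

lemma entCost_le_entCost_swap {α β : Type*} [MeasurableSpace α] [MeasurableSpace β]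
    (μ : Measure α) (ν : Measure β) [IsProbabilityMeasure μ] [IsProbabilityMeasure ν]
    (c : α × β → ℝ) (ε : ℝ) :
    entCost μ ν c ε ≤ entCost ν μ (fun z => c z.swap) ε := by
  refine le_sInf ?_
  rintro v ⟨γ, hγ, h1, h2, rfl⟩
  refine sInf_le ⟨γ.map Prod.swap, Measure.isProbabilityMeasure_map measurable_swap.aemeasurable,
    by rw [Measure.fst_map_swap, h2], by rw [Measure.snd_map_swap, h1], ?_⟩
  rw [integral_map_swap, ← ent_map_swap γ (ν.prod μ), Measure.prod_swap]

lemma entCost_congr {α β : Type*} [MeasurableSpace α] [MeasurableSpace β]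
    {μ : Measure α} {ν : Measure β} {c c' : α × β → ℝ}
    (h : ∀ γ : Measure (α × β), γ.fst = μ → γ.snd = ν → c =ᵐ[γ] c') (ε : ℝ) :
    entCost μ ν c ε = entCost μ ν c' ε := by
  rw [entCost, entCost]
  congr 1
  ext v
  refine exists_congr fun γ => and_congr_right fun _ => and_congr_right fun h1 =>
    and_congr_right fun h2 => ?_
  rw [integral_congr_ae (h γ h1 h2)]

lemma ae_mem_msupport {α : Type*} [TopologicalSpace α] [SecondCountableTopology α]
    [MeasurableSpace α] (μ : Measure α) : ∀ᵐ x ∂μ, x ∈ msupport μ := by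
  refine measure_null_of_locally_null _ fun x hx => ?_
  obtain ⟨U, hU, hxU, h0⟩ : ∃ U, IsOpen U ∧ x ∈ U ∧ μ U = 0 := by
    simpa [msupport] using hx
  exact ⟨U, mem_nhdsWithin_of_mem_nhds (hU.mem_nhds hxU), h0⟩

/-- A Lipschitz function on a compact set extends to a bounded Lipschitz function. -/
lemma LipschitzOnWith.exists_bounded_extension {α : Type*} [PseudoMetricSpace α] {s : Set α}
    (hs : IsCompact s) {f : α → ℝ} {L : ℝ≥0} (hf : LipschitzOnWith L f s) :
    ∃ (g : α → ℝ) (C : ℝ), LipschitzWith L g ∧ Set.EqOn f g s ∧ ∀ x, |g x| ≤ C := by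
  obtain ⟨g, hg, hfg⟩ := hf.extend_real
  obtain ⟨C, hC⟩ := hs.exists_bound_of_continuousOn hf.continuousOn
  refine ⟨fun x => max (-|C|) (min |C| (g x)), |C|, (hg.const_min _).const_max _, fun x hx => ?_,
    fun x => abs_le.2 ⟨le_max_left _ _, max_le (by linarith [abs_nonneg C]) (min_le_left _ _)⟩⟩
  have h := abs_le.1 ((hC x hx).trans (le_abs_self C))
  show f x = max (-|C|) (min |C| (g x))
  rw [← hfg hx, min_eq_right h.2, max_eq_right h.1]

/-- Upper bound for Lipschitz costs: `v_ε ≤ v₀ + ε min(H_ε(μ⁻), H_ε(μ⁺)) + L ε`. -/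
theorem entCost_upper_bound_lipschitz {d : ℕ}
    (μm μp : Measure (EuclideanSpace ℝ (Fin d)))
    [IsProbabilityMeasure μm] [IsProbabilityMeasure μp]
    (hXm : IsCompact (msupport μm)) (hXp : IsCompact (msupport μp))
    (c : EuclideanSpace ℝ (Fin d) × EuclideanSpace ℝ (Fin d) → ℝ)
    (L : ℝ≥0) (hc : LipschitzOnWith L c (msupport μm ×ˢ msupport μp)) :
    ∀ ε : ℝ, 0 < ε →
      entCost μm μp c ε ≤ entCost μm μp c 0
        + (ε : EReal) * ((min (entH ε μm) (entH ε μp) : ℝ≥0∞) : EReal)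
        + (((L : ℝ) * ε : ℝ) : EReal) := by
  intro ε hε
  obtain ⟨g, C, hg, hcg, hC⟩ := hc.exists_bounded_extension (hXm.prod hXp)
  have hae : ∀ γ : Measure (EuclideanSpace ℝ (Fin d) × EuclideanSpace ℝ (Fin d)),
      γ.fst = μm → γ.snd = μp → c =ᵐ[γ] g := by
    rintro γ rfl rfl
    filter_upwards [ae_of_ae_map measurable_fst.aemeasurable (ae_mem_msupport γ.fst),
      ae_of_ae_map measurable_snd.aemeasurable (ae_mem_msupport γ.snd)] with z h1 h2
    exact hcg ⟨h1, h2⟩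
  rw [entCost_congr hae, entCost_congr hae]
  have hgm : Measurable g := hg.continuous.measurable
  have key : ∀ γ : Measure (EuclideanSpace ℝ (Fin d) × EuclideanSpace ℝ (Fin d)),
      IsProbabilityMeasure γ → γ.fst = μm → γ.snd = μp →
      entCost μm μp g ε ≤ ((∫ z, g z ∂γ : ℝ) : EReal) +
        (ε : EReal) * ((min (entH ε μm) (entH ε μp) : ℝ≥0∞) : EReal) +
        (((L : ℝ) * ε : ℝ) : EReal) := by
    intro γ hγ h1 h2
    rcases min_choice (entH ε μm) (entH ε μp) with h | h <;> rw [h]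
    · refine entCost_le_add_entH h1 h2 hgm hC L.coe_nonneg (fun x x' y => ?_) (ae_mem_msupport μm)
        hXm.isBounded hε
      have := hg.dist_le_mul (x, y) (x', y)
      rw [Prod.dist_eq, dist_self, max_eq_left dist_nonneg, Real.dist_eq] at this
      linarith [le_abs_self (g (x, y) - g (x', y))]
    · have hP : IsProbabilityMeasure (γ.map Prod.swap) :=
        Measure.isProbabilityMeasure_map measurable_swap.aemeasurable
      have e : ∫ z, g z ∂γ = ∫ z, g z.swap ∂γ.map Prod.swap := by
        rw [integral_map_swap γ fun z => g z.swap]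
        simp only [Prod.swap_swap]
      rw [e]
      refine (entCost_le_entCost_swap μm μp g ε).trans (entCost_le_add_entH
        (by rw [Measure.fst_map_swap, h2]) (by rw [Measure.snd_map_swap, h1])
        (hgm.comp measurable_swap) (fun z => hC z.swap) L.coe_nonneg (fun x x' y => ?_)
        (ae_mem_msupport μp) hXp.isBounded hε)
      have := hg.dist_le_mul (y, x) (y, x')
      rw [Prod.dist_eq, dist_self, max_eq_right dist_nonneg, Real.dist_eq] at this
      show g (y, x) ≤ g (y, x') + L * dist x x'
      linarith [le_abs_self (g (y, x) - g (y, x'))]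
  have hlow : ((-C : ℝ) : EReal) ≤ entCost μm μp g 0 := by
    refine le_sInf ?_
    rintro v ⟨γ, hγ, -, -, rfl⟩
    rw [EReal.coe_zero, zero_mul, add_zero, EReal.coe_le_coe_iff]
    have := norm_integral_le_of_norm_le_const (f := g) (μ := γ)
      (ae_of_all _ fun z => (Real.norm_eq_abs (g z)).trans_le (hC z))
    rw [probReal_univ, mul_one, Real.norm_eq_abs] at this
    exact (abs_le.1 this).1
  rcases eq_or_ne (min (entH ε μm) (entH ε μp)) ∞ with htop | htop
  · rw [htop, EReal.coe_ennreal_top, EReal.coe_mul_top_of_pos hε,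
      EReal.add_top_of_ne_bot ((EReal.bot_lt_coe _).trans_le hlow).ne', EReal.top_add_coe]
    exact le_top
  have hr : ∀ v : EReal, v + (ε : EReal) * ((min (entH ε μm) (entH ε μp) : ℝ≥0∞) : EReal) +
      (((L : ℝ) * ε : ℝ) : EReal) =
      v + ((ε * (min (entH ε μm) (entH ε μp)).toReal + L * ε : ℝ) : EReal) := by
    intro v
    conv_lhs => rw [← ENNReal.ofReal_toReal htop, EReal.coe_ennreal_ofReal,
      max_eq_left ENNReal.toReal_nonneg]
    rw [EReal.coe_add, EReal.coe_mul, EReal.coe_mul, add_assoc]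
  simp only [hr] at key ⊢
  rw [← EReal.sub_le_iff_le_add (Or.inl (EReal.coe_ne_bot _)) (Or.inl (EReal.coe_ne_top _))]
  refine le_sInf ?_
  rintro v ⟨γ, hγ, h1, h2, rfl⟩
  rw [EReal.coe_zero, zero_mul, add_zero,
    EReal.sub_le_iff_le_add (Or.inl (EReal.coe_ne_bot _)) (Or.inl (EReal.coe_ne_top _))]
  exact key γ hγ h1 h2
end
end
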